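/- arXiv:1604.03689 — 8 statements merged into one kernel-verified Lean document; each statement's English description precedes it below -/
import Mathlib

section
/- Let η > 2, c > 0 and r₀ > 0 be real numbers. Then 2∫_{r₀}^∞ (1 − exp(−c r^{−η})) r dr = c^{2/η} γ(1 − 2/η, c r₀^{−η}) − r₀² (1 − exp(−c r₀^{−η})). -/
open MeasureTheory Real

/-- Lower incomplete gamma function `γ(a, x) = ∫_0^x t^(a-1) e^(-t) dt`. -/
noncomputable def lowerIncGamma (a x : ℝ) : ℝ :=
  ∫ t in (0:ℝ)..x, t ^ (a - 1) * Real.exp (-t)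

/-!
Write `y = c r^(-η)`. Since `c^(p/η) y^(-p/η) = r^p`, the function
`F r = (1 - exp (-y)) r^p - c^(p/η) γ(1 - p/η, y)` has derivative `p (1 - exp (-y)) r^(p-1)` on
`(0, ∞)`: the two terms containing `dy/dr` cancel. The bound `0 ≤ 1 - exp (-y) ≤ y` shows, for
`p < η`, both that this derivative is integrable at infinity and that `F` tends to `0` there, so
its integral over `(r₀, ∞)` is `-F r₀`. The planar case is `p = 2`.
-/

open Filter Set Topology

section LowerIncGamma

lemma lowerIncGamma_zero (a : ℝ) : lowerIncGamma a 0 = 0 :=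
  intervalIntegral.integral_same

variable {a : ℝ}

lemma intervalIntegrable_rpow_sub_one_mul_exp_neg (ha : 0 < a) (x y : ℝ) :
    IntervalIntegrable (fun t : ℝ => t ^ (a - 1) * exp (-t)) volume x y :=
  (intervalIntegral.intervalIntegrable_rpow' (by linarith)).mul_continuousOn (by fun_prop)

lemma continuous_lowerIncGamma (ha : 0 < a) : Continuous (lowerIncGamma a) :=
  intervalIntegral.continuous_primitive (intervalIntegrable_rpow_sub_one_mul_exp_neg ha) 0

lemma hasDerivAt_lowerIncGamma {x : ℝ} (ha : 0 < a) (hx : x ≠ 0) :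
    HasDerivAt (lowerIncGamma a) (x ^ (a - 1) * exp (-x)) x := by
  have hmeas : Measurable (fun t : ℝ => t ^ (a - 1) * exp (-t)) := by fun_prop
  have hcont : ContinuousAt (fun t : ℝ => t ^ (a - 1) * exp (-t)) x :=
    (continuousAt_rpow_const x _ (Or.inl hx)).mul (by fun_prop)
  exact intervalIntegral.integral_hasDerivAt_right
    (intervalIntegrable_rpow_sub_one_mul_exp_neg ha 0 x)
    hmeas.stronglyMeasurable.stronglyMeasurableAtFilter hcont

end LowerIncGamma

section PowerLaw

variable {p η c r : ℝ}

lemma norm_one_sub_exp_mul_rpow_le (hc : 0 ≤ c) (hr : 0 < r) :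
    ‖(1 - exp (-c * r ^ (-η))) * r ^ p‖ ≤ c * r ^ (p - η) := by
  have hy : -c * r ^ (-η) ≤ 0 := mul_nonpos_of_nonpos_of_nonneg (by linarith) (by positivity)
  have hexp : 0 ≤ 1 - exp (-c * r ^ (-η)) := sub_nonneg.2 (exp_le_one_iff.2 hy)
  calc ‖(1 - exp (-c * r ^ (-η))) * r ^ p‖ = (1 - exp (-c * r ^ (-η))) * r ^ p :=
        norm_of_nonneg (by positivity)
    _ ≤ c * r ^ (-η) * r ^ p := by
        gcongr
        linarith [add_one_le_exp (-c * r ^ (-η))]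
    _ = c * r ^ (p - η) := by
        rw [mul_assoc, ← rpow_add hr, neg_add_eq_sub]

lemma integrableOn_Ioi_one_sub_exp_mul_rpow (hp : p < η) (hc : 0 ≤ c) (hr : 0 < r) :
    IntegrableOn (fun s => (1 - exp (-c * s ^ (-η))) * s ^ (p - 1)) (Ioi r) := by
  have hdom : IntegrableOn (fun s : ℝ => c * s ^ (p - 1 - η)) (Ioi r) :=
    (integrableOn_Ioi_rpow_of_lt (by linarith) hr).const_mul c
  refine hdom.mono' (by fun_prop) ?_
  filter_upwards [self_mem_ae_restrict measurableSet_Ioi] with s hs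
  exact norm_one_sub_exp_mul_rpow_le hc (hr.trans hs)

lemma tendsto_one_sub_exp_mul_rpow_atTop (hp : p < η) (hc : 0 ≤ c) :
    Tendsto (fun r => (1 - exp (-c * r ^ (-η))) * r ^ p) atTop (𝓝 0) := by
  have hbound : Tendsto (fun r : ℝ => c * r ^ (p - η)) atTop (𝓝 0) := by
    simpa only [neg_sub, mul_zero] using (tendsto_rpow_neg_atTop (sub_pos.2 hp)).const_mul c
  refine squeeze_zero_norm' ?_ hbound
  filter_upwards [eventually_gt_atTop 0] with r hr
  exact norm_one_sub_exp_mul_rpow_le hc hr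

lemma rpow_div_mul_mul_rpow_neg_rpow (hη : η ≠ 0) (hc : 0 < c) (hr : 0 ≤ r) :
    c ^ (p / η) * (c * r ^ (-η)) ^ (-(p / η)) = r ^ p := by
  have hexponent : -η * -(p / η) = p := by field_simp
  rw [mul_rpow hc.le (by positivity), ← rpow_mul hr, hexponent, ← mul_assoc, ← rpow_add hc,
    add_neg_cancel, rpow_zero, one_mul]

/-- The antiderivative of `p (1 - exp (-c r^(-η))) r^(p-1)` on `(0, ∞)` that vanishes at infinity
when `p < η`. -/
noncomputable def interferencePrimitive (p η c r : ℝ) : ℝ :=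
  (1 - exp (-c * r ^ (-η))) * r ^ p - c ^ (p / η) * lowerIncGamma (1 - p / η) (c * r ^ (-η))

lemma hasDerivAt_interferencePrimitive (hη : 0 < η) (hp : p < η) (hc : 0 < c) (hr : 0 < r) :
    HasDerivAt (interferencePrimitive p η c)
      (p * ((1 - exp (-c * r ^ (-η))) * r ^ (p - 1))) r := by
  have ha : 0 < 1 - p / η := sub_pos.2 ((div_lt_one hη).2 hp)
  have hpow (q : ℝ) : HasDerivAt (fun s : ℝ => s ^ q) (q * r ^ (q - 1)) r :=
    hasDerivAt_rpow_const (Or.inl hr.ne')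
  have hexp := (((hpow (-η)).const_mul (-c)).exp.const_sub 1).mul (hpow p)
  have hgamma := ((hasDerivAt_lowerIncGamma ha (by positivity)).comp r
    ((hpow (-η)).const_mul c)).const_mul (c ^ (p / η))
  refine (hexp.sub hgamma).congr_deriv ?_
  rw [← rpow_div_mul_mul_rpow_neg_rpow hη.ne' hc hr.le (p := p), sub_sub_cancel_left, neg_mul c]
  ring

lemma tendsto_interferencePrimitive_atTop (hη : 0 < η) (hp : p < η) (hc : 0 ≤ c) :
    Tendsto (interferencePrimitive p η c) atTop (𝓝 0) := by
  have ha : 0 < 1 - p / η := sub_pos.2 ((div_lt_one hη).2 hp)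
  have hy : Tendsto (fun r : ℝ => c * r ^ (-η)) atTop (𝓝 0) := by
    simpa only [mul_zero] using (tendsto_rpow_neg_atTop hη).const_mul c
  have hgamma : Tendsto (fun r => c ^ (p / η) * lowerIncGamma (1 - p / η) (c * r ^ (-η))) atTop
      (𝓝 0) := by
    simpa only [Function.comp_apply, lowerIncGamma_zero, mul_zero] using
      (((continuous_lowerIncGamma ha).tendsto 0).comp hy).const_mul (c ^ (p / η))
  unfold interferencePrimitive
  simpa only [sub_zero] using
    (tendsto_one_sub_exp_mul_rpow_atTop hp hc).sub hgamma

end PowerLaw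

theorem stmt0_general (p η c r₀ : ℝ) (hη : 0 < η) (hp : p < η) (hc : 0 < c) (hr₀ : 0 < r₀) :
    p * ∫ r in Ioi r₀, (1 - exp (-c * r ^ (-η))) * r ^ (p - 1) =
      c ^ (p / η) * lowerIncGamma (1 - p / η) (c * r₀ ^ (-η))
        - r₀ ^ p * (1 - exp (-c * r₀ ^ (-η))) := by
  rw [← integral_const_mul, integral_Ioi_of_hasDerivAt_of_tendsto'
    (fun r hr => hasDerivAt_interferencePrimitive hη hp hc (hr₀.trans_le hr))
    ((integrableOn_Ioi_one_sub_exp_mul_rpow hp hc.le hr₀).const_mul p)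
    (tendsto_interferencePrimitive_atTop hη hp hc.le), interferencePrimitive]
  ring

/-- For `η > 2`, `c > 0`, `r₀ > 0`,
`2∫_{r₀}^∞ (1 − exp(−c r^{−η})) r dr
  = c^{2/η} γ(1 − 2/η, c r₀^{−η}) − r₀² (1 − exp(−c r₀^{−η}))`. -/
theorem stmt0 (η c r₀ : ℝ) (hη : 2 < η) (hc : 0 < c) (hr₀ : 0 < r₀) :
    2 * ∫ r in Set.Ioi r₀, (1 - Real.exp (-c * r ^ (-η))) * r =
      c ^ (2 / η) * lowerIncGamma (1 - 2 / η) (c * r₀ ^ (-η))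
        - r₀ ^ 2 * (1 - Real.exp (-c * r₀ ^ (-η))) := by
  simpa only [show (2 : ℝ) - 1 = 1 by norm_num, rpow_one, rpow_two] using
    stmt0_general 2 η c r₀ (two_pos.trans hη) hη hc hr₀
end

section
/- Let η > 2 be real. For every real x ≥ 0, (1 − e^{−x}) − x^{2/η} γ(1 − 2/η, x) = 2 ∑_{k=1}^∞ (−1)^k x^k / ((η k − 2) k!), where the series on the right converges absolutely. -/
/-!
Put `s = 2 / η`. Since `1 - e^{-x} = γ(1, x)`, the left-hand side is the difference between the
values at `0` and at `s` of `s ↦ x^s γ(1 - s, x)`. Integrating the exponential series term by term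
against the integrable weight `t^{-s}` gives
`x^s γ(1 - s, x) = ∑_{j ≥ 0} (-1)^j x^{j + 1} / (j! (j + 1 - s))`, and
`1 / (j + 1) - 1 / (j + 1 - s) = -s / ((j + 1) (j + 1 - s))`. With `k = j + 1` the claim follows
from `s / (k - s) = 2 / (η k - 2)`.
-/

open MeasureTheory Real

lemma lowerIncGamma_one (x : ℝ) : lowerIncGamma 1 x = 1 - Real.exp (-x) := by
  simp [lowerIncGamma]

lemma hasSum_integral_mul_pow_div_factorial {α 𝕜 : Type*} [MeasurableSpace α] [RCLike 𝕜]
    {μ : Measure α} {f g : α → 𝕜} {C : ℝ} (hf : Integrable f μ) (hg : AEStronglyMeasurable g μ)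
    (hgC : ∀ᵐ t ∂μ, ‖g t‖ ≤ C) :
    HasSum (fun j : ℕ => ∫ t, f t * (g t ^ j / j.factorial) ∂μ)
      (∫ t, f t * NormedSpace.exp (g t) ∂μ) := by
  refine hasSum_integral_of_dominated_convergence (fun j t => ‖f t‖ * (C ^ j / j.factorial))
    (fun j => hf.1.mul (((continuous_pow j).div_const _).comp_aestronglyMeasurable hg))
    ?bound
    (.of_forall fun t => (Real.summable_pow_div_factorial C).mul_left _) ?integrable
    (.of_forall fun t => (NormedSpace.expSeries_div_hasSum_exp (g t)).mul_left _)
  case bound =>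
    intro j
    filter_upwards [hgC] with t ht
    rw [norm_mul, norm_div, norm_pow, RCLike.norm_natCast]
    gcongr
  case integrable =>
    simp_rw [tsum_mul_left]
    exact hf.norm.mul_const _

lemma integral_rpow_mul_pow {r x : ℝ} (hr : -1 < r) (hx : 0 ≤ x) (n : ℕ) :
    ∫ t in (0:ℝ)..x, t ^ r * t ^ n = x ^ (r + n + 1) / (r + n + 1) := by
  have hrn : -1 < r + n := by linarith [n.cast_nonneg (α := ℝ)]
  calc ∫ t in (0:ℝ)..x, t ^ r * t ^ n
      = ∫ t in (0:ℝ)..x, t ^ (r + n) := by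
        -- The integrands can differ at `t = 0`, where `0 ^ 0 = 1`.
        refine intervalIntegral.integral_congr_uIoo fun t ht => ?_
        rw [Set.uIoo_of_le hx] at ht
        exact (Real.rpow_add_natCast ht.1.ne' r n).symm
    _ = x ^ (r + n + 1) / (r + n + 1) := by
        rw [integral_rpow (.inl hrn), Real.zero_rpow (by linarith), sub_zero]

lemma hasSum_lowerIncGamma {a x : ℝ} (ha : 0 < a) (hx : 0 ≤ x) :
    HasSum (fun j : ℕ => (-1) ^ j * x ^ (a + j) / (j.factorial * (a + j)))
      (lowerIncGamma a x) := by
  have weight_integrable : Integrable (fun t : ℝ => t ^ (a - 1)) (volume.restrict (Set.Ioc 0 x)) :=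
    (intervalIntegrable_iff_integrableOn_Ioc_of_le hx).1
      (intervalIntegral.intervalIntegrable_rpow' (by linarith))
  have neg_bounded : ∀ᵐ t ∂volume.restrict (Set.Ioc 0 x), ‖-t‖ ≤ x := by
    filter_upwards [ae_restrict_mem measurableSet_Ioc] with t ht
    rw [norm_neg, Real.norm_of_nonneg ht.1.le]
    exact ht.2
  have series := hasSum_integral_mul_pow_div_factorial weight_integrable
    measurable_neg.aestronglyMeasurable neg_bounded
  simp only [← Real.exp_eq_exp_ℝ, ← intervalIntegral.integral_of_le hx] at series
  refine series.congr_fun fun j => ?_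
  calc (-1) ^ j * x ^ (a + j) / (j.factorial * (a + j))
      = (-1) ^ j / j.factorial * ∫ t in (0:ℝ)..x, t ^ (a - 1) * t ^ j := by
        rw [integral_rpow_mul_pow (by linarith) hx, show a - 1 + j + 1 = a + j by ring,
          div_mul_div_comm]
    _ = ∫ t in (0:ℝ)..x, t ^ (a - 1) * ((-t) ^ j / j.factorial) := by
        rw [← intervalIntegral.integral_const_mul]
        congr with t
        rw [neg_pow t]
        ring

lemma hasSum_rpow_mul_lowerIncGamma {s x : ℝ} (hs : s < 1) (hx : 0 ≤ x) :
    HasSum (fun j : ℕ => (-1) ^ j * x ^ (j + 1) / (j.factorial * (j + 1 - s)))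
      (x ^ s * lowerIncGamma (1 - s) x) := by
  refine ((hasSum_lowerIncGamma (sub_pos.2 hs) hx).mul_left (x ^ s)).congr_fun fun j => ?_
  have exponent : s + (1 - s + j) = (j + 1 : ℕ) := by
    push_cast
    ring
  have power : x ^ s * x ^ (1 - s + j) = x ^ (j + 1) := by
    rw [← Real.rpow_add' hx (by rw [exponent]; positivity), exponent, Real.rpow_natCast]
  rw [← power, show (j : ℝ) + 1 - s = 1 - s + j by ring]
  ring

lemma hasSum_one_sub_exp_neg_sub_rpow_mul_lowerIncGamma {s x : ℝ} (hs : s < 1) (hx : 0 ≤ x) :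
    HasSum (fun j : ℕ => s * ((-1) ^ (j + 1) * x ^ (j + 1) / ((j + 1 - s) * (j + 1).factorial)))
      (1 - Real.exp (-x) - x ^ s * lowerIncGamma (1 - s) x) := by
  have at_zero := hasSum_rpow_mul_lowerIncGamma zero_lt_one hx
  rw [Real.rpow_zero, one_mul, sub_zero, lowerIncGamma_one] at at_zero
  refine (at_zero.sub (hasSum_rpow_mul_lowerIncGamma hs hx)).congr_fun fun j => ?_
  have denom_ne_zero : (j : ℝ) + 1 - s ≠ 0 := by
    linarith [j.cast_nonneg (α := ℝ)]
  rw [Nat.factorial_succ]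
  push_cast
  field_simp
  ring

theorem stmt1_general (η x : ℝ) (hη : η < 0 ∨ 2 < η) (hx : 0 ≤ x) :
    Summable (fun k : ℕ =>
      |(-1 : ℝ) ^ (k + 1) * x ^ (k + 1) / ((η * (k + 1) - 2) * (Nat.factorial (k + 1)))|) ∧
    (1 - Real.exp (-x)) - x ^ (2 / η) * lowerIncGamma (1 - 2 / η) x =
      2 * ∑' k : ℕ,
        (-1 : ℝ) ^ (k + 1) * x ^ (k + 1) / ((η * (k + 1) - 2) * (Nat.factorial (k + 1))) := by
  have η_ne_zero : η ≠ 0 := by rintro rfl; norm_num at hη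
  have hs : 2 / η < 1 := hη.elim
    (fun h => (div_neg_of_pos_of_neg two_pos h).trans one_pos)
    (fun h => (div_lt_one (two_pos.trans h)).2 h)
  have series := (hasSum_one_sub_exp_neg_sub_rpow_mul_lowerIncGamma hs hx).div_const 2
  have coefficient (k : ℕ) : (k : ℝ) + 1 - 2 / η = (η * (k + 1) - 2) / η := by
    field_simp
  have hasSum_half := series.congr_fun
    (g := fun k : ℕ =>
      (-1) ^ (k + 1) * x ^ (k + 1) / ((η * (k + 1) - 2) * (Nat.factorial (k + 1))))
    fun k => by rw [coefficient]; field_simp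
  exact ⟨hasSum_half.summable.abs, by rw [hasSum_half.tsum_eq]; ring⟩

/-- For `η > 2` and `x ≥ 0`,
`(1 − e^{−x}) − x^{2/η} γ(1 − 2/η, x) = 2 ∑_{k=1}^∞ (−1)^k x^k / ((η k − 2) k!)`,
the series converging absolutely. -/
theorem stmt1 (η x : ℝ) (hη : 2 < η) (hx : 0 ≤ x) :
    Summable (fun k : ℕ =>
      |(-1 : ℝ) ^ (k + 1) * x ^ (k + 1) / ((η * (k + 1) - 2) * (Nat.factorial (k + 1)))|) ∧
    (1 - Real.exp (-x)) - x ^ (2 / η) * lowerIncGamma (1 - 2 / η) x =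
      2 * ∑' k : ℕ,
        (-1 : ℝ) ^ (k + 1) * x ^ (k + 1) / ((η * (k + 1) - 2) * (Nat.factorial (k + 1))) :=
  stmt1_general η x (.inr hη) hx
end

section
/- Let η > 2, r₀ > 0 and 0 ≤ c < r₀^η be real. Then 2 ∫_{r₀}^∞ c r / (r^η + c) dr = 2 r₀² ∑_{n=1}^∞ (−1)^{n+1} (c / r₀^η)^n / (η n − 2), where the series converges absolutely. (Equivalently, the left-hand side equals (2 c r₀^{2−η}/(η−2)) · ₂F₁(1, 1 − 2/η; 2 − 2/η; −c r₀^{−η}).) -/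
open MeasureTheory Real

/-!
For `r > r₀` one has `|c| < r ^ η`, so the geometric series expands `c / (r ^ η + c)` in powers of
`c / r ^ η`. After multiplication by `r ^ (s - 1)`, where `s = 2` is the planar case, each term is a
constant times a power of `r` that is integrable at infinity because `s < η`. Powers of `r` being
positive, the `L¹` norm of each term is the norm of its integral; these norms are dominated by a
geometric series of ratio `|c| / r₀ ^ η < 1`, which justifies exchanging sum and integral.
-/

lemma hasSum_geometric_div_add {K : Type*} [NormedField K] {z w : K} (h : ‖z‖ < ‖w‖) :
    HasSum (fun n : ℕ => (-1) ^ ((n + 1) + 1) * (z / w) ^ (n + 1)) (z / (w + z)) := by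
  have hw : w ≠ 0 := norm_pos_iff.1 ((norm_nonneg z).trans_lt h)
  have hwz : w + z ≠ 0 := fun h0 => by
    rw [eq_neg_of_add_eq_zero_left h0, norm_neg] at h
    exact h.false
  have hratio : ‖-(z / w)‖ < 1 := by
    rwa [norm_neg, norm_div, div_lt_one (norm_pos_iff.2 hw)]
  have value : z / w * (1 - -(z / w))⁻¹ = z / (w + z) := by
    rw [sub_neg_eq_add]
    field_simp
  have term (n : ℕ) : z / w * (-(z / w)) ^ n = (-1) ^ ((n + 1) + 1) * (z / w) ^ (n + 1) := by
    rw [neg_pow (z / w)]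
    ring
  simpa only [value, term] using (hasSum_geometric_of_norm_lt_one hratio).mul_left (z / w)

lemma hasSum_integral_smul_const_of_nonneg {α ι E : Type*} [MeasurableSpace α] {μ : Measure α}
    [Countable ι] [NormedAddCommGroup E] [NormedSpace ℝ E] [CompleteSpace E]
    {g : ι → α → ℝ} {a : ι → E} (g_nonneg : ∀ i, 0 ≤ᵐ[μ] g i)
    (g_integrable : ∀ i, Integrable (g i) μ)
    (h : Summable fun i => ‖(∫ x, g i x ∂μ) • a i‖) :
    HasSum (fun i => (∫ x, g i x ∂μ) • a i) (∫ x, ∑' i, g i x • a i ∂μ) := by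
  have integral_norm (i : ι) : ∫ x, ‖g i x • a i‖ ∂μ = ‖(∫ x, g i x ∂μ) • a i‖ := by
    rw [norm_smul, norm_of_nonneg (integral_nonneg_of_ae (g_nonneg i)), ← integral_mul_const]
    refine integral_congr_ae ((g_nonneg i).mono fun x hx => ?_)
    simp only [norm_smul, norm_of_nonneg hx]
  simpa only [integral_smul_const] using
    hasSum_integral_of_summable_integral_norm (fun i => (g_integrable i).smul_const (a i))
      (h.congr fun i => (integral_norm i).symm)

section Rpow

variable {η s r : ℝ}

lemma rpow_div_rpow_pow (hr : 0 < r) (m : ℕ) : r ^ s / (r ^ η) ^ m = r ^ (s - η * m) := by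
  rw [rpow_sub hr, rpow_mul_natCast hr.le]

lemma integrableOn_Ioi_rpow_sub_one_div_pow {m : ℕ} (hr : 0 < r) (hs : s < η * m) :
    IntegrableOn (fun x : ℝ => x ^ (s - 1) / (x ^ η) ^ m) (Set.Ioi r) :=
  (integrableOn_Ioi_rpow_of_lt (by linarith) hr).congr_fun
    (fun _ hx => (rpow_div_rpow_pow (hr.trans hx) m).symm) measurableSet_Ioi

lemma integral_Ioi_rpow_sub_one_div_pow {m : ℕ} (hr : 0 < r) (hs : s < η * m) :
    ∫ x in Set.Ioi r, x ^ (s - 1) / (x ^ η) ^ m = r ^ s / (r ^ η) ^ m / (η * m - s) := by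
  calc ∫ x in Set.Ioi r, x ^ (s - 1) / (x ^ η) ^ m
      = ∫ x in Set.Ioi r, x ^ (s - 1 - η * m) :=
        setIntegral_congr_fun measurableSet_Ioi fun _ hx => rpow_div_rpow_pow (hr.trans hx) m
    _ = -r ^ (s - 1 - η * m + 1) / (s - 1 - η * m + 1) :=
        integral_Ioi_rpow_of_lt (by linarith) hr
    _ = r ^ s / (r ^ η) ^ m / (η * m - s) := by
        rw [rpow_div_rpow_pow hr, show s - 1 - η * m + 1 = s - η * m by ring, neg_div, ← div_neg,
          neg_sub]

end Rpow

section Series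

variable {𝕜 : Type*} [RCLike 𝕜] {η s r₀ : ℝ} {c : 𝕜}

lemma sub_le_mul_add_one_sub (hη : 0 ≤ η) (n : ℕ) : η - s ≤ η * (n + 1) - s :=
  sub_le_sub_right (le_mul_of_one_le_right hη (le_add_of_nonneg_left n.cast_nonneg)) s

lemma summable_norm_alternating_pow_div {z : 𝕜} (hη : 0 ≤ η) (hs : s < η) (hz : ‖z‖ < 1) :
    Summable fun n : ℕ =>
      ‖(-1) ^ ((n + 1) + 1) * z ^ (n + 1) / ((η * (n + 1) - s : ℝ) : 𝕜)‖ := by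
  have geometric : Summable fun n : ℕ => ‖z‖ ^ (n + 1) / (η - s) :=
    ((summable_nat_add_iff 1).2 (summable_geometric_of_lt_one (norm_nonneg z) hz)).div_const _
  refine geometric.of_nonneg_of_le (fun _ => norm_nonneg _) fun n => ?_
  have hle : η - s ≤ η * (n + 1) - s := sub_le_mul_add_one_sub hη n
  rw [norm_div, norm_mul, norm_pow, norm_neg, norm_one, one_pow, one_mul, norm_pow,
    RCLike.norm_of_nonneg ((sub_pos.2 hs).le.trans hle)]
  exact div_le_div_of_nonneg_left (by positivity) (sub_pos.2 hs) hle

lemma hasSum_rpow_smul_expansion {r : ℝ} (hr : 0 < r) (hc : ‖c‖ < r ^ η) :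
    HasSum (fun n : ℕ => (r ^ (s - 1) / (r ^ η) ^ (n + 1)) • ((-1) ^ ((n + 1) + 1) * c ^ (n + 1)))
      (c * ((r ^ (s - 1) : ℝ) : 𝕜) / (((r ^ η : ℝ) : 𝕜) + c)) := by
  have hnorm : ‖c‖ < ‖((r ^ η : ℝ) : 𝕜)‖ := by
    rwa [RCLike.norm_of_nonneg (rpow_nonneg hr.le η)]
  have term (n : ℕ) :
      ((r ^ (s - 1) : ℝ) : 𝕜) * ((-1) ^ ((n + 1) + 1) * (c / ((r ^ η : ℝ) : 𝕜)) ^ (n + 1)) =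
        (r ^ (s - 1) / (r ^ η) ^ (n + 1)) • ((-1) ^ ((n + 1) + 1) * c ^ (n + 1)) := by
    rw [RCLike.real_smul_eq_coe_mul]
    push_cast
    ring
  simpa only [term, ← mul_div_assoc, mul_comm _ c] using
    (hasSum_geometric_div_add hnorm).mul_left ((r ^ (s - 1) : ℝ) : 𝕜)

lemma integral_Ioi_rpow_smul_expansion (hr₀ : 0 < r₀) (n : ℕ) (hs : s < η * (n + 1)) :
    (∫ r in Set.Ioi r₀, r ^ (s - 1) / (r ^ η) ^ (n + 1)) • ((-1) ^ ((n + 1) + 1) * c ^ (n + 1)) =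
      ((r₀ ^ s : ℝ) : 𝕜) * ((-1) ^ ((n + 1) + 1) * (c / ((r₀ ^ η : ℝ) : 𝕜)) ^ (n + 1) /
        ((η * (n + 1) - s : ℝ) : 𝕜)) := by
  rw [integral_Ioi_rpow_sub_one_div_pow hr₀ (by exact_mod_cast hs), RCLike.real_smul_eq_coe_mul]
  push_cast
  ring

lemma norm_div_rpow_lt_one (hr₀ : 0 < r₀) (hc : ‖c‖ < r₀ ^ η) :
    ‖c / ((r₀ ^ η : ℝ) : 𝕜)‖ < 1 := by
  have hpos : 0 < r₀ ^ η := rpow_pos_of_pos hr₀ η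
  rwa [norm_div, RCLike.norm_of_nonneg hpos.le, div_lt_one hpos]

lemma hasSum_integral_Ioi_rpow_div_add (hη : 0 ≤ η) (hs : s < η) (hr₀ : 0 < r₀)
    (hc : ‖c‖ < r₀ ^ η) :
    HasSum (fun n : ℕ => ((r₀ ^ s : ℝ) : 𝕜) * ((-1) ^ ((n + 1) + 1) *
        (c / ((r₀ ^ η : ℝ) : 𝕜)) ^ (n + 1) / ((η * (n + 1) - s : ℝ) : 𝕜)))
      (∫ r in Set.Ioi r₀, c * ((r ^ (s - 1) : ℝ) : 𝕜) / (((r ^ η : ℝ) : 𝕜) + c)) := by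
  have hs_mul (n : ℕ) : s < η * (n + 1) :=
    sub_pos.1 ((sub_pos.2 hs).trans_le (sub_le_mul_add_one_sub hη n))
  have integral_term (n : ℕ) := integral_Ioi_rpow_smul_expansion (c := c) hr₀ n (hs_mul n)
  have term_nonneg (n : ℕ) :
      0 ≤ᵐ[volume.restrict (Set.Ioi r₀)] fun r => r ^ (s - 1) / (r ^ η) ^ (n + 1) :=
    ae_restrict_of_forall_mem measurableSet_Ioi fun r hr => by
      have : 0 < r := hr₀.trans hr
      positivity
  have summable_integrals : Summable fun n : ℕ =>
      ‖(∫ r in Set.Ioi r₀, r ^ (s - 1) / (r ^ η) ^ (n + 1)) •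
        ((-1) ^ ((n + 1) + 1) * c ^ (n + 1))‖ := by
    simp only [integral_term, norm_mul (_ : 𝕜) (_ / _)]
    exact (summable_norm_alternating_pow_div hη hs (norm_div_rpow_lt_one hr₀ hc)).mul_left _
  have exchange := hasSum_integral_smul_const_of_nonneg term_nonneg
    (fun n => integrableOn_Ioi_rpow_sub_one_div_pow hr₀ (by exact_mod_cast hs_mul n))
    summable_integrals
  have pointwise : Set.EqOn
      (fun r => ∑' n : ℕ,
        (r ^ (s - 1) / (r ^ η) ^ (n + 1)) • ((-1) ^ ((n + 1) + 1) * c ^ (n + 1)))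
      (fun r => c * ((r ^ (s - 1) : ℝ) : 𝕜) / (((r ^ η : ℝ) : 𝕜) + c)) (Set.Ioi r₀) :=
    fun r hr => (hasSum_rpow_smul_expansion (hr₀.trans hr)
      (hc.trans_le (rpow_le_rpow hr₀.le (le_of_lt hr) hη))).tsum_eq
  simpa only [integral_term, setIntegral_congr_fun measurableSet_Ioi pointwise] using exchange

theorem stmt4_general (hη : 0 ≤ η) (hs : s < η) (hr₀ : 0 < r₀) (hc : ‖c‖ < r₀ ^ η) :
    Summable (fun n : ℕ => ‖(-1) ^ ((n + 1) + 1) * (c / ((r₀ ^ η : ℝ) : 𝕜)) ^ (n + 1) /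
      ((η * (n + 1) - s : ℝ) : 𝕜)‖) ∧
    ∫ r in Set.Ioi r₀, c * ((r ^ (s - 1) : ℝ) : 𝕜) / (((r ^ η : ℝ) : 𝕜) + c) =
      ((r₀ ^ s : ℝ) : 𝕜) * ∑' n : ℕ, (-1) ^ ((n + 1) + 1) * (c / ((r₀ ^ η : ℝ) : 𝕜)) ^ (n + 1) /
        ((η * (n + 1) - s : ℝ) : 𝕜) := by
  refine ⟨summable_norm_alternating_pow_div hη hs (norm_div_rpow_lt_one hr₀ hc), ?_⟩
  rw [← tsum_mul_left, (hasSum_integral_Ioi_rpow_div_add hη hs hr₀ hc).tsum_eq]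

end Series

/-- For `η > 2`, `r₀ > 0` and `0 ≤ c < r₀^η`,
`2 ∫_{r₀}^∞ c r / (r^η + c) dr = 2 r₀² ∑_{n=1}^∞ (−1)^{n+1} (c / r₀^η)^n / (η n − 2)`,
the series converging absolutely. -/
theorem stmt4 (η c r₀ : ℝ) (hη : 2 < η) (hr₀ : 0 < r₀) (hc : 0 ≤ c)
    (hcr : c < r₀ ^ η) :
    Summable (fun n : ℕ =>
      |(-1 : ℝ) ^ ((n + 1) + 1) * (c / r₀ ^ η) ^ (n + 1) / (η * (n + 1) - 2)|) ∧
    2 * ∫ r in Set.Ioi r₀, c * r / (r ^ η + c) =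
      2 * r₀ ^ 2 * ∑' n : ℕ,
        (-1 : ℝ) ^ ((n + 1) + 1) * (c / r₀ ^ η) ^ (n + 1) / (η * (n + 1) - 2) := by
  simpa [mul_assoc, abs_div, abs_mul, show (2 : ℝ) - 1 = 1 by norm_num] using
    stmt4_general (by linarith) hη hr₀ ((norm_of_nonneg hc).trans_lt hcr)
end

section
/- Let η > 2 be real, m ≥ 1 an integer, r₀ > 0 and 0 ≤ c < r₀^η real. Then 2 ∫_{r₀}^∞ (1 − (1 + c r^{−η})^{−m}) r dr = 2 r₀² ∑_{n=1}^∞ (−1)^{n+1} (m)_n (c / r₀^η)^n / (n! (η n − 2)), where (m)_n = m(m+1)⋯(m+n−1) is the Pochhammer symbol and the series converges absolutely. (Equivalently, the left-hand side equals r₀² (₂F₁(−2/η, m; 1 − 2/η; −c r₀^{−η}) − 1).) -/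
open MeasureTheory Real

/-!
The binomial series expands `1 - (1 + x)^{-m}` in powers `x ^ (n + 1)`, absolutely convergent for
`|x| < 1`. At `x = c r ^ (-η)`, these powers integrate against `r ^ (d - 1) dr` over `(r₀, ∞)` to
`r₀ ^ d (c / r₀ ^ η) ^ (n + 1) / (η (n + 1) - d)`, where `d` is the dimension of the space carrying
the interferers (`d = 2` for the plane). Up to the bounded factors `r₀ ^ d / (η (n + 1) - d)`, the
integrated series is the binomial series at `c / r₀ ^ η`, so it converges absolutely and sum and
integral can be interchanged.
-/

section BinomialSeries

lemma multichoose_eq_ascPochhammer_eval_div_factorial {K : Type*} [Field K] [CharZero K]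
    (a : K) (n : ℕ) :
    Ring.multichoose a n = (ascPochhammer K n).eval a / (n.factorial : K) := by
  rw [eq_div_iff (Nat.cast_ne_zero.mpr n.factorial_ne_zero), mul_comm, ← nsmul_eq_mul,
    Ring.factorial_nsmul_multichoose_eq_ascPochhammer, Polynomial.ascPochhammer_smeval_eq_eval]

lemma hasSum_inv_one_add_rpow (m : ℝ) {x : ℝ} (hx : |x| < 1) :
    HasSum (fun n : ℕ => (-1) ^ n * (ascPochhammer ℝ n).eval m / n.factorial * x ^ n)
      ((1 + x) ^ m)⁻¹ := by
  have hball : -x ∈ Metric.eball (0 : ℝ) 1 := by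
    simpa [enorm_eq_nnnorm, ← NNReal.coe_lt_coe] using hx
  have h := (one_div_one_sub_rpow_hasFPowerSeriesOnBall_zero m).hasSum hball
  simp only [FormalMultilinearSeries.ofScalars_apply_eq, ← Ring.multichoose_eq,
    multichoose_eq_ascPochhammer_eval_div_factorial, zero_add, sub_neg_eq_add, one_div,
    smul_eq_mul] at h
  refine h.congr_fun fun n => ?_
  rw [neg_pow x n]
  ring

lemma hasSum_one_sub_inv_one_add_rpow (m : ℝ) {x : ℝ} (hx : |x| < 1) :
    HasSum (fun n : ℕ => x ^ (n + 1) *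
        ((-1) ^ ((n + 1) + 1) * (ascPochhammer ℝ (n + 1)).eval m / (n + 1).factorial))
      (1 - ((1 + x) ^ m)⁻¹) := by
  have h := ((hasSum_nat_add_iff' 1).mpr (hasSum_inv_one_add_rpow m hx)).neg
  simp only [Finset.sum_range_one, pow_zero, ascPochhammer_zero, Polynomial.eval_one,
    Nat.factorial_zero, Nat.cast_one, mul_one, div_one, neg_sub] at h
  refine h.congr_fun fun n => ?_
  ring

end BinomialSeries

section TermwiseIntegration

variable {η d r₀ : ℝ}

lemma rpow_sub_one_mul_mul_rpow_neg_pow {r : ℝ} (hr : 0 < r) (η d c : ℝ) (n : ℕ) :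
    r ^ (d - 1) * (c * r ^ (-η)) ^ n = c ^ n * r ^ (d - 1 - η * n) := by
  rw [mul_pow, ← rpow_mul_natCast hr.le, sub_eq_add_neg (d - 1), rpow_add hr, neg_mul]
  ring

lemma integrableOn_Ioi_rpow_mul_mul_rpow_neg_pow (hr₀ : 0 < r₀) (c : ℝ) {n : ℕ}
    (hn : d < η * n) :
    IntegrableOn (fun r : ℝ => r ^ (d - 1) * (c * r ^ (-η)) ^ n) (Set.Ioi r₀) :=
  (integrableOn_congr_fun
    (fun _ hr => rpow_sub_one_mul_mul_rpow_neg_pow (hr₀.trans hr) η d c n) measurableSet_Ioi).mpr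
    ((integrableOn_Ioi_rpow_of_lt (by linarith) hr₀).const_mul (c ^ n))

lemma integral_Ioi_rpow_mul_mul_rpow_neg_pow (hr₀ : 0 < r₀) (c : ℝ) {n : ℕ}
    (hn : d < η * n) :
    ∫ r in Set.Ioi r₀, r ^ (d - 1) * (c * r ^ (-η)) ^ n =
      r₀ ^ d * ((c / r₀ ^ η) ^ n / (η * n - d)) := by
  have hpow : r₀ ^ (d - η * n) = r₀ ^ d / (r₀ ^ η) ^ n := by
    rw [rpow_sub hr₀, rpow_mul_natCast hr₀.le]
  calc ∫ r in Set.Ioi r₀, r ^ (d - 1) * (c * r ^ (-η)) ^ n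
      = ∫ r in Set.Ioi r₀, c ^ n * r ^ (d - 1 - η * n) :=
        setIntegral_congr_fun measurableSet_Ioi fun _ hr =>
          rpow_sub_one_mul_mul_rpow_neg_pow (hr₀.trans hr) η d c n
    _ = c ^ n * (-r₀ ^ (d - η * n) / (d - η * n)) := by
        rw [integral_const_mul, integral_Ioi_rpow_of_lt (by linarith) hr₀,
          show d - 1 - η * n + 1 = d - η * n by ring]
    _ = r₀ ^ d * ((c / r₀ ^ η) ^ n / (η * n - d)) := by
        rw [hpow, neg_div, ← div_neg, neg_sub, div_pow]
        ring

lemma integral_Ioi_norm_rpow_mul_mul_rpow_neg_pow (hr₀ : 0 < r₀) (c : ℝ) {n : ℕ}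
    (hn : d < η * n) :
    ∫ r in Set.Ioi r₀, ‖r ^ (d - 1) * (c * r ^ (-η)) ^ n‖ =
      r₀ ^ d * (‖c / r₀ ^ η‖ ^ n / (η * n - d)) := by
  have hnorm : ∀ r ∈ Set.Ioi r₀,
      ‖r ^ (d - 1) * (c * r ^ (-η)) ^ n‖ = r ^ (d - 1) * (‖c‖ * r ^ (-η)) ^ n := fun r hr => by
    have hr' : 0 < r := hr₀.trans hr
    rw [norm_mul, norm_pow, norm_mul, norm_of_nonneg (rpow_nonneg hr'.le (d - 1)),
      norm_of_nonneg (rpow_nonneg hr'.le (-η))]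
  rw [setIntegral_congr_fun measurableSet_Ioi hnorm,
    integral_Ioi_rpow_mul_mul_rpow_neg_pow hr₀ ‖c‖ hn, norm_div,
    norm_of_nonneg (rpow_nonneg hr₀.le η)]

lemma lt_mul_natCast_succ (hη : 0 ≤ η) (hd : d < η) (n : ℕ) : d < η * (n + 1 : ℕ) :=
  hd.trans_le (le_mul_of_one_le_right hη (by simp))

lemma summable_div_mul_natCast_succ_sub {u : ℕ → ℝ} (hu : Summable u) (hu₀ : ∀ n, 0 ≤ u n)
    (hη : 0 ≤ η) (hd : d < η) : Summable fun n : ℕ => u n / (η * (n + 1 : ℕ) - d) := by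
  refine (hu.div_const (η - d)).of_nonneg_of_le (fun n => ?_) fun n => ?_
  · exact div_nonneg (hu₀ n) (sub_pos.mpr (lt_mul_natCast_succ hη hd n)).le
  · have hη_le : η ≤ η * (n + 1 : ℕ) := le_mul_of_one_le_right hη (by simp)
    exact div_le_div_of_nonneg_left (hu₀ n) (sub_pos.mpr hd) (by gcongr)

theorem hasSum_integral_Ioi_rpow_smul_tsum_pow_smul {E : Type*} [NormedAddCommGroup E]
    [NormedSpace ℝ E] [CompleteSpace E] {a : ℕ → E} {c : ℝ} (hη : 0 ≤ η) (hd : d < η)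
    (hr₀ : 0 < r₀) (ha : Summable fun n => ‖(c / r₀ ^ η) ^ (n + 1) • a n‖) :
    HasSum (fun n : ℕ => (r₀ ^ d * ((c / r₀ ^ η) ^ (n + 1) / (η * (n + 1 : ℕ) - d))) • a n)
      (∫ r in Set.Ioi r₀, r ^ (d - 1) • ∑' n : ℕ, (c * r ^ (-η)) ^ (n + 1) • a n) := by
  have hlt := lt_mul_natCast_succ hη hd
  have hint (n : ℕ) : IntegrableOn
      (fun r : ℝ => (r ^ (d - 1) * (c * r ^ (-η)) ^ (n + 1)) • a n) (Set.Ioi r₀) :=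
    (integrableOn_Ioi_rpow_mul_mul_rpow_neg_pow hr₀ c (hlt n)).smul_const (a n)
  have hnorm (n : ℕ) :
      ∫ r in Set.Ioi r₀, ‖(r ^ (d - 1) * (c * r ^ (-η)) ^ (n + 1)) • a n‖ =
        r₀ ^ d * (‖(c / r₀ ^ η) ^ (n + 1) • a n‖ / (η * (n + 1 : ℕ) - d)) := by
    simp only [norm_smul _ (a n)]
    rw [integral_mul_const, integral_Ioi_norm_rpow_mul_mul_rpow_neg_pow hr₀ c (hlt n), norm_pow]
    ring
  have hsum : Summable fun n : ℕ =>
      ∫ r in Set.Ioi r₀, ‖(r ^ (d - 1) * (c * r ^ (-η)) ^ (n + 1)) • a n‖ := by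
    simp only [hnorm]
    exact (summable_div_mul_natCast_succ_sub ha (fun _ => norm_nonneg _) hη hd).mul_left (r₀ ^ d)
  have hswap := hasSum_integral_of_summable_integral_norm hint hsum
  simp only [integral_smul_const, integral_Ioi_rpow_mul_mul_rpow_neg_pow hr₀ c (hlt _)] at hswap
  simpa only [mul_smul (_ ^ (d - 1)), tsum_const_smul''] using hswap

end TermwiseIntegration

lemma abs_mul_rpow_neg_lt_one {η c r₀ r : ℝ} (hη : 0 ≤ η) (hr₀ : 0 < r₀) (hr : r₀ ≤ r)
    (hcr : |c| < r₀ ^ η) : |c * r ^ (-η)| < 1 := by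
  have hr' : 0 < r := hr₀.trans_le hr
  rw [rpow_neg hr'.le, ← div_eq_mul_inv, abs_div, abs_of_pos (rpow_pos_of_pos hr' η),
    div_lt_one (rpow_pos_of_pos hr' η)]
  exact hcr.trans_le (rpow_le_rpow hr₀.le hr hη)

theorem hasSum_integral_Ioi_one_sub_inv_one_add_rpow {η d c r₀ : ℝ} (m : ℝ) (hη : 0 ≤ η)
    (hd : d < η) (hr₀ : 0 < r₀) (hcr : |c| < r₀ ^ η) :
    HasSum (fun n : ℕ => r₀ ^ d *
        ((-1) ^ ((n + 1) + 1) * (ascPochhammer ℝ (n + 1)).eval m * (c / r₀ ^ η) ^ (n + 1)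
          / ((n + 1).factorial * (η * (n + 1) - d))))
      (∫ r in Set.Ioi r₀, (1 - ((1 + c * r ^ (-η)) ^ m)⁻¹) * r ^ (d - 1)) := by
  have hbinom (r : ℝ) (hr : r₀ ≤ r) :=
    hasSum_one_sub_inv_one_add_rpow m (abs_mul_rpow_neg_lt_one hη hr₀ hr hcr)
  have hendpoint : c * r₀ ^ (-η) = c / r₀ ^ η := by rw [rpow_neg hr₀.le, div_eq_mul_inv]
  have hsum := hasSum_integral_Ioi_rpow_smul_tsum_pow_smul hη hd hr₀
    (hendpoint ▸ (hbinom r₀ le_rfl).summable.norm)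
  simp only [smul_eq_mul] at hsum
  have hintegrand : ∀ r ∈ Set.Ioi r₀, (1 - ((1 + c * r ^ (-η)) ^ m)⁻¹) * r ^ (d - 1) =
      r ^ (d - 1) * ∑' n : ℕ, (c * r ^ (-η)) ^ (n + 1) *
        ((-1) ^ ((n + 1) + 1) * (ascPochhammer ℝ (n + 1)).eval m / (n + 1).factorial) :=
    fun r hr => by rw [(hbinom r (le_of_lt hr)).tsum_eq, mul_comm]
  rw [setIntegral_congr_fun measurableSet_Ioi hintegrand]
  refine hsum.congr_fun fun n => ?_
  rw [Nat.cast_succ n, div_mul_eq_div_div]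
  ring

theorem stmt6_general (η c r₀ m : ℝ) (hη : 2 < η) (hr₀ : 0 < r₀) (hcr : |c| < r₀ ^ η) :
    Summable (fun n : ℕ =>
      |(-1 : ℝ) ^ ((n + 1) + 1) * (ascPochhammer ℝ (n + 1)).eval m * (c / r₀ ^ η) ^ (n + 1)
        / ((Nat.factorial (n + 1)) * (η * (n + 1) - 2))|) ∧
    2 * ∫ r in Set.Ioi r₀, (1 - ((1 + c * r ^ (-η)) ^ m)⁻¹) * r =
      2 * r₀ ^ 2 * ∑' n : ℕ,
        (-1 : ℝ) ^ ((n + 1) + 1) * (ascPochhammer ℝ (n + 1)).eval m * (c / r₀ ^ η) ^ (n + 1)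
          / ((Nat.factorial (n + 1)) * (η * (n + 1) - 2)) := by
  have h := hasSum_integral_Ioi_one_sub_inv_one_add_rpow m (by linarith) hη hr₀ hcr
  norm_num only [rpow_two, rpow_one] at h
  refine ⟨((summable_mul_left_iff (pow_ne_zero 2 hr₀.ne')).mp h.summable).abs, ?_⟩
  rw [← h.tsum_eq, tsum_mul_left, mul_assoc]

/-- For `η > 2`, an integer `m ≥ 1`, `r₀ > 0` and `0 ≤ c < r₀^η`,
`2 ∫_{r₀}^∞ (1 − (1 + c r^{−η})^{−m}) r dr
  = 2 r₀² ∑_{n=1}^∞ (−1)^{n+1} (m)_n (c / r₀^η)^n / (n! (η n − 2))`,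
where `(m)_n` is the (ascending) Pochhammer symbol and the series converges absolutely. -/
theorem stmt6 (η c r₀ : ℝ) (m : ℕ) (hm : 1 ≤ m) (hη : 2 < η) (hr₀ : 0 < r₀)
    (hc : 0 ≤ c) (hcr : c < r₀ ^ η) :
    Summable (fun n : ℕ =>
      |(-1 : ℝ) ^ ((n + 1) + 1) * (ascPochhammer ℝ (n + 1)).eval (m : ℝ)
          * (c / r₀ ^ η) ^ (n + 1)
        / ((Nat.factorial (n + 1)) * (η * (n + 1) - 2))|) ∧
    2 * ∫ r in Set.Ioi r₀, (1 - ((1 + c * r ^ (-η)) ^ m)⁻¹) * r =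
      2 * r₀ ^ 2 * ∑' n : ℕ,
        (-1 : ℝ) ^ ((n + 1) + 1) * (ascPochhammer ℝ (n + 1)).eval (m : ℝ)
            * (c / r₀ ^ η) ^ (n + 1)
          / ((Nat.factorial (n + 1)) * (η * (n + 1) - 2)) := by
  simpa only [rpow_natCast] using stmt6_general η c r₀ m hη hr₀ (by rwa [abs_of_nonneg hc])
end

section
/- Let H be an exponential random variable with rate 1, and let I be a nonnegative real random variable independent of H. Let P > 0, r₀ > 0, η > 0, N₀ > 0 and T ≥ 0 be real. Then ℙ[ P·H·r₀^{−η} / (I + N₀) < T ] = 1 − e^{−T N₀ r₀^η / P} · E[ e^{−(T r₀^η / P) I} ]. -/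
open MeasureTheory ProbabilityTheory Real

/-! With `S = P r₀ ^ (-η)`, outage is avoided exactly when `H ≥ (T / S) (I + N)`. Averaging the
exponential tail `ℙ[H ≥ y] = e^{-r y}` over the independent interference produces the Laplace
transform of `(T / S) (I + N)` at `r`, and the deterministic noise factors out of it. -/

instance nullSingletonClass_expMeasure (r : ℝ) : NullSingletonClass (expMeasure r) := by
  unfold expMeasure gammaMeasure
  infer_instance

lemma expMeasure_Ici {r y : ℝ} (hr : 0 < r) (hy : 0 ≤ y) :
    expMeasure r (Set.Ici y) = ENNReal.ofReal (exp (-(r * y))) := by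
  have := isProbabilityMeasure_expMeasure hr
  have hcdf : (expMeasure r).real (Set.Iic y) = 1 - exp (-(r * y)) := by
    rw [← cdf_eq_real, cdf_expMeasure_eq hr, if_pos hy]
  rw [← measure_congr Ioi_ae_eq_Ici, ← ofReal_measureReal, ← Set.compl_Iic,
    probReal_compl_eq_one_sub measurableSet_Iic, hcdf, sub_sub_cancel]

section Independence

variable {Ω : Type*} [MeasurableSpace Ω] {μ : Measure Ω}

lemma measure_prodMk_mem_eq_lintegral_of_indepFun {E F : Type*} [MeasurableSpace E]
    [MeasurableSpace F] [IsFiniteMeasure μ] {X : Ω → E} {Y : Ω → F} {ν : Measure E}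
    {s : Set (E × F)} (hX : HasLaw X ν μ) (hY : AEMeasurable Y μ) (hXY : IndepFun X Y μ)
    (hs : MeasurableSet s) :
    μ {ω | (X ω, Y ω) ∈ s} = ∫⁻ ω, ν {x | (x, Y ω) ∈ s} ∂μ := by
  have : IsFiniteMeasure ν := hX.isFiniteMeasure_iff.1 inferInstance
  have hprod : HasLaw (fun ω ↦ (X ω, Y ω)) (ν.prod (μ.map Y)) μ := hXY.hasLaw_prod hX ⟨hY, rfl⟩
  calc μ {ω | (X ω, Y ω) ∈ s}
      = (ν.prod (μ.map Y)) s := hprod.measure_eq hs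
    _ = ∫⁻ y, ν {x | (x, y) ∈ s} ∂(μ.map Y) := Measure.prod_apply_symm hs
    _ = ∫⁻ ω, ν {x | (x, Y ω) ∈ s} ∂μ :=
        lintegral_map' (measurable_measure_prodMk_right hs).aemeasurable hY

variable {H : Ω → ℝ} {r : ℝ}

lemma measureReal_le_eq_mgf_of_hasLaw_expMeasure {Y : Ω → ℝ} (hr : 0 < r)
    (hH : HasLaw H (expMeasure r) μ) (hY : AEMeasurable Y μ) (hHY : IndepFun H Y μ)
    (hY0 : 0 ≤ᵐ[μ] Y) :
    μ.real {ω | Y ω ≤ H ω} = mgf Y μ (-r) := by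
  have := isProbabilityMeasure_expMeasure hr
  have := hH.isProbabilityMeasure
  have htail : μ {ω | Y ω ≤ H ω} = ∫⁻ ω, ENNReal.ofReal (exp (-r * Y ω)) ∂μ :=
    calc μ {ω | Y ω ≤ H ω}
        = ∫⁻ ω, expMeasure r (Set.Ici (Y ω)) ∂μ :=
          measure_prodMk_mem_eq_lintegral_of_indepFun hH hY hHY
            (measurableSet_le measurable_snd measurable_fst)
      _ = ∫⁻ ω, ENNReal.ofReal (exp (-r * Y ω)) ∂μ := by
          refine lintegral_congr_ae ?_
          filter_upwards [hY0] with ω hω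
          rw [expMeasure_Ici hr hω, neg_mul]
  rw [measureReal_def, htail, mgf, integral_eq_lintegral_of_nonneg_ae
    (ae_of_all _ fun ω ↦ (exp_pos _).le) (by fun_prop)]

lemma measureReal_lt_eq_one_sub_mgf_of_hasLaw_expMeasure {Y : Ω → ℝ} (hr : 0 < r)
    (hH : HasLaw H (expMeasure r) μ) (hY : AEMeasurable Y μ) (hHY : IndepFun H Y μ)
    (hY0 : 0 ≤ᵐ[μ] Y) :
    μ.real {ω | H ω < Y ω} = 1 - mgf Y μ (-r) := by
  have := isProbabilityMeasure_expMeasure hr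
  have := hH.isProbabilityMeasure
  have hcompl : {ω | H ω < Y ω} = {ω | Y ω ≤ H ω}ᶜ := by
    ext ω
    simp
  rw [hcompl, probReal_compl_eq_one_sub₀ (nullMeasurableSet_le hY hH.aemeasurable),
    measureReal_le_eq_mgf_of_hasLaw_expMeasure hr hH hY hHY hY0]

lemma measureReal_mul_div_lt_eq_one_sub_mgf_of_hasLaw_expMeasure {W : Ω → ℝ} {S T : ℝ} (hr : 0 < r)
    (hH : HasLaw H (expMeasure r) μ) (hW : AEMeasurable W μ) (hHW : IndepFun H W μ)
    (hW0 : ∀ᵐ ω ∂μ, 0 < W ω) (hS : 0 < S) (hT : 0 ≤ T) :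
    μ.real {ω | S * H ω / W ω < T} = 1 - mgf W μ (-(r * T / S)) := by
  have hevent : {ω | S * H ω / W ω < T} =ᵐ[μ] {ω | H ω < T / S * W ω} := by
    refine Filter.eventuallyEq_set.2 ?_
    filter_upwards [hW0] with ω hω
    rw [div_lt_iff₀ hω, div_mul_eq_mul_div, lt_div_iff₀' hS]
  have hscaled0 : 0 ≤ᵐ[μ] fun ω ↦ T / S * W ω := by
    filter_upwards [hW0] with ω hω
    exact mul_nonneg (div_nonneg hT hS.le) hω.le
  have hscaled : IndepFun H (fun ω ↦ T / S * W ω) μ :=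
    hHW.comp measurable_id (measurable_const_mul (T / S))
  rw [measureReal_congr hevent, measureReal_lt_eq_one_sub_mgf_of_hasLaw_expMeasure hr hH
    (hW.const_mul _) hscaled hscaled0, mgf_const_mul]
  congr 2
  ring

theorem stmt7_general {I : Ω → ℝ} {S N T : ℝ} (hr : 0 < r) (hH : HasLaw H (expMeasure r) μ)
    (hI : AEMeasurable I μ) (hHI : IndepFun H I μ) (hIN : ∀ᵐ ω ∂μ, 0 < I ω + N)
    (hS : 0 < S) (hT : 0 ≤ T) :
    μ.real {ω | S * H ω / (I ω + N) < T} =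
      1 - exp (-(r * T * N / S)) * ∫ ω, exp (-(r * T / S) * I ω) ∂μ := by
  have hHIN : IndepFun H (fun ω ↦ I ω + N) μ := hHI.comp measurable_id (measurable_add_const N)
  rw [measureReal_mul_div_lt_eq_one_sub_mgf_of_hasLaw_expMeasure hr hH (hI.add_const N) hHIN
    hIN hS hT, mgf_add_const, mul_comm, mgf]
  congr 3
  ring

end Independence

/-- Rayleigh-fading SINR outage probability expressed through the Laplace transform of
the interference power: if `H` is a unit-rate exponential random variable independent
of the nonnegative interference power `I`, then for `P, r₀, η, N₀ > 0` and `T ≥ 0`,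
`ℙ[P H r₀^{−η} / (I + N₀) < T] = 1 − e^{−T N₀ r₀^η / P} E[e^{−(T r₀^η / P) I}]`. -/
theorem stmt7 {Ω : Type*} [MeasurableSpace Ω] (μ : Measure Ω) [IsProbabilityMeasure μ]
    (H I : Ω → ℝ) (hH : Measurable H) (hI : Measurable I)
    (hHexp : μ.map H = expMeasure 1)
    (hIpos : ∀ ω, 0 ≤ I ω)
    (hindep : IndepFun H I μ)
    (P r₀ η N₀ T : ℝ) (hP : 0 < P) (hr₀ : 0 < r₀) (hη : 0 < η) (hN₀ : 0 < N₀)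
    (hT : 0 ≤ T) :
    (μ {ω | P * H ω * r₀ ^ (-η) / (I ω + N₀) < T}).toReal =
      1 - Real.exp (-(T * N₀ * r₀ ^ η / P)) *
        ∫ ω, Real.exp (-(T * r₀ ^ η / P) * I ω) ∂μ := by
  have hgeneral := stmt7_general (S := P * r₀ ^ (-η)) one_pos ⟨hH.aemeasurable, hHexp⟩
    hI.aemeasurable hindep (ae_of_all μ fun ω ↦ add_pos_of_nonneg_of_pos (hIpos ω) hN₀)
    (by positivity) hT
  simpa only [measureReal_def, rpow_neg hr₀.le, ← div_eq_mul_inv, div_div_eq_mul_div,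
    div_mul_eq_mul_div, one_mul] using hgeneral
end

section
/- Let U ≥ 1 be an integer and let H be a Gamma-distributed random variable with shape U and rate 1. Let I be a nonnegative real random variable with ℙ(I > 0) = 1, independent of H, and let P > 0, r₀ > 0, η > 0, T > 0 be real. Let L(z) = E[e^{−z I}] for z > 0 (L is infinitely differentiable on (0, ∞)). Then ℙ[ P·H·r₀^{−η} / I < T ] = 1 − ∑_{u=0}^{U−1} ((−1)^u / u!) (T r₀^η / P)^u L^{(u)}(T r₀^η / P), where L^{(u)} denotes the u-th derivative of L. -/
open MeasureTheory ProbabilityTheory Real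

/-!
Put `s = T r₀^η / P`. Since `I > 0` almost surely, the event `P H r₀^{-η} / I < T` is `H < s I`, and
conditioning on `I` turns its probability into the expectation of the Gamma CDF at `s I`. For an
integer shape that CDF is one minus a Poisson partial sum, because the derivative of the partial sum
telescopes to minus the Gamma density. Taking expectations termwise leaves the moments
`E[I^u e^{-zI}] = (-1)^u L^{(u)}(z)`, obtained by differentiating the moment generating function of
`I` at `-z`, an interior point of its domain because `I ≥ 0`.
-/

/-- The probability that an Erlang variable, `Gamma(n, 1)` with integer shape `n ≥ 1`, is at least
`x ≥ 0`, written as the probability that a Poisson variable of mean `x` is less than `n`. This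
form makes its expectation at a random point a finite sum of moments. -/
noncomputable def erlangTail (n : ℕ) (x : ℝ) : ℝ :=
  ∑ u ∈ Finset.range n, x ^ u / u.factorial * exp (-x)

lemma erlangTail_succ (n : ℕ) (x : ℝ) :
    erlangTail (n + 1) x = erlangTail n x + x ^ n / n.factorial * exp (-x) :=
  Finset.sum_range_succ _ _

lemma erlangTail_succ_zero (n : ℕ) : erlangTail (n + 1) 0 = 1 := by
  simp [erlangTail, Finset.sum_range_succ']

lemma hasDerivAt_erlangTail_succ (n : ℕ) (x : ℝ) :
    HasDerivAt (erlangTail (n + 1)) (-(x ^ n / n.factorial * exp (-x))) x := by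
  have hexp : HasDerivAt (fun t : ℝ ↦ exp (-t)) (-exp (-x)) x := by
    simpa using (hasDerivAt_neg x).exp
  induction n with
  | zero =>
    have hone : erlangTail 1 = fun t ↦ exp (-t) := by
      ext t
      simp [erlangTail]
    simpa [hone] using hexp
  | succ n ih =>
    have hpow :
        HasDerivAt (fun t : ℝ ↦ t ^ (n + 1) / (n + 1).factorial) (x ^ n / n.factorial) x := by
      refine ((hasDerivAt_pow (n + 1) x).div_const _).congr_deriv ?_
      rw [Nat.factorial_succ, Nat.cast_mul, add_tsub_cancel_right]
      exact mul_div_mul_left _ _ (by positivity)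
    rw [funext (erlangTail_succ (n + 1))]
    exact (ih.add (hpow.mul hexp)).congr_deriv (by ring)

lemma gammaPDFReal_natCast_add_one (n : ℕ) (r : ℝ) {x : ℝ} (hx : 0 ≤ x) :
    gammaPDFReal ((n + 1 : ℕ) : ℝ) r x = (r * x) ^ n / n.factorial * exp (-(r * x)) * r := by
  rw [gammaPDFReal, if_pos hx, rpow_natCast, Nat.cast_succ, Gamma_nat_eq_factorial,
    add_sub_cancel_right, rpow_natCast]
  ring

lemma integral_Iic_gammaPDFReal (a r : ℝ) {x : ℝ} (hx : 0 ≤ x) :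
    ∫ t in Set.Iic x, gammaPDFReal a r t = ∫ t in 0..x, gammaPDFReal a r t := by
  rw [intervalIntegral.integral_of_le hx, ← integral_Icc_eq_integral_Ioc]
  exact setIntegral_eq_of_subset_of_forall_sdiff_eq_zero measurableSet_Iic
    Set.Icc_subset_Iic_self fun t ht ↦ if_neg fun ht0 ↦ ht.2 ⟨ht0, ht.1⟩

lemma cdf_gammaMeasure_natCast {n : ℕ} (hn : n ≠ 0) {r : ℝ} (hr : 0 < r) {x : ℝ} (hx : 0 ≤ x) :
    cdf (gammaMeasure n r) x = 1 - erlangTail n (r * x) := by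
  obtain ⟨m, rfl⟩ := Nat.exists_eq_succ_of_ne_zero hn
  have hderiv (t : ℝ) : HasDerivAt (fun t ↦ -erlangTail (m + 1) (r * t))
      ((r * t) ^ m / m.factorial * exp (-(r * t)) * r) t := by
    have hmul : HasDerivAt (r * ·) r t := by simpa using (hasDerivAt_id t).const_mul r
    exact ((hasDerivAt_erlangTail_succ m (r * t)).comp t hmul).neg.congr_deriv (by ring)
  have hpdf : Set.EqOn (gammaPDFReal ((m + 1 : ℕ) : ℝ) r)
      (fun t ↦ (r * t) ^ m / m.factorial * exp (-(r * t)) * r) (Set.uIcc 0 x) := fun t ht ↦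
    gammaPDFReal_natCast_add_one m r (Set.uIcc_of_le hx ▸ ht).1
  calc cdf (gammaMeasure (m + 1 : ℕ) r) x
      = ∫ t in 0..x, gammaPDFReal ((m + 1 : ℕ) : ℝ) r t := by
        rw [cdf_gammaMeasure_eq_integral (by positivity) hr, integral_Iic_gammaPDFReal _ _ hx]
    _ = ∫ t in 0..x, (r * t) ^ m / m.factorial * exp (-(r * t)) * r :=
        intervalIntegral.integral_congr hpdf
    _ = -erlangTail (m + 1) (r * x) - -erlangTail (m + 1) (r * 0) :=
        intervalIntegral.integral_eq_sub_of_hasDerivAt (fun t _ ↦ hderiv t)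
          (Continuous.intervalIntegrable (by fun_prop) _ _)
    _ = 1 - erlangTail (m + 1) (r * x) := by
        rw [mul_zero, erlangTail_succ_zero]
        ring

lemma gammaMeasure_real_Iio_natCast {n : ℕ} (hn : n ≠ 0) {r : ℝ} (hr : 0 < r) {x : ℝ}
    (hx : 0 ≤ x) : (gammaMeasure n r).real (Set.Iio x) = 1 - erlangTail n (r * x) := by
  have hprob : IsProbabilityMeasure (gammaMeasure n r) :=
    isProbabilityMeasure_gammaMeasure (by positivity) hr
  have hae : Set.Iio x =ᵐ[gammaMeasure n r] Set.Iic x :=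
    (withDensity_absolutelyContinuous _ _).ae_le Iio_ae_eq_Iic
  rw [measureReal_congr hae, ← cdf_eq_real, cdf_gammaMeasure_natCast hn hr hx]

section Independence

variable {Ω α β : Type*} [MeasurableSpace Ω] [MeasurableSpace α] [MeasurableSpace β]

lemma measureReal_prodMk_mem_of_indepFun {μ : Measure Ω} [IsFiniteMeasure μ] {X : Ω → α}
    {Y : Ω → β} (hX : AEMeasurable X μ) (hY : AEMeasurable Y μ) (hXY : IndepFun X Y μ)
    {s : Set (α × β)} (hs : MeasurableSet s) :
    μ.real {ω | (X ω, Y ω) ∈ s} = ∫ ω, (μ.map X).real {x | (x, Y ω) ∈ s} ∂μ := by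
  have hsection : Measurable fun y ↦ μ.map X {x | (x, y) ∈ s} := measurable_measure_prodMk_right hs
  have hprod : μ {ω | (X ω, Y ω) ∈ s} = ∫⁻ ω, μ.map X {x | (x, Y ω) ∈ s} ∂μ :=
    calc μ {ω | (X ω, Y ω) ∈ s}
        = μ.map (fun ω ↦ (X ω, Y ω)) s := (Measure.map_apply_of_aemeasurable (hX.prodMk hY) hs).symm
      _ = ((μ.map X).prod (μ.map Y)) s := by
          rw [(indepFun_iff_map_prod_eq_prod_map_map hX hY).1 hXY]
      _ = ∫⁻ y, μ.map X {x | (x, y) ∈ s} ∂μ.map Y := Measure.prod_apply_symm hs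
      _ = ∫⁻ ω, μ.map X {x | (x, Y ω) ∈ s} ∂μ := lintegral_map' hsection.aemeasurable hY
  rw [measureReal_def, hprod]
  exact (integral_toReal (hsection.comp_aemeasurable hY)
    (ae_of_all _ fun _ ↦ measure_lt_top _ _)).symm

end Independence

section Laplace

variable {Ω : Type*} [MeasurableSpace Ω] {μ : Measure Ω} {X : Ω → ℝ}

lemma Iio_subset_integrableExpSet [IsFiniteMeasure μ] (hX : AEMeasurable X μ)
    (hX0 : ∀ᵐ ω ∂μ, 0 ≤ X ω) : Set.Iio 0 ⊆ integrableExpSet X μ := by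
  intro t ht
  refine Integrable.of_bound (by fun_prop) 1 ?_
  filter_upwards [hX0] with ω hω
  rw [norm_of_nonneg (exp_nonneg _), exp_le_one_iff]
  exact mul_nonpos_of_nonpos_of_nonneg (le_of_lt ht) hω

lemma mem_interior_integrableExpSet_of_neg [IsFiniteMeasure μ] (hX : AEMeasurable X μ)
    (hX0 : ∀ᵐ ω ∂μ, 0 ≤ X ω) {t : ℝ} (ht : t < 0) : t ∈ interior (integrableExpSet X μ) :=
  interior_maximal (Iio_subset_integrableExpSet hX hX0) isOpen_Iio ht

lemma integral_pow_mul_exp_neg_mul {z : ℝ} (hz : -z ∈ interior (integrableExpSet X μ)) (u : ℕ) :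
    ∫ ω, X ω ^ u * exp (-z * X ω) ∂μ = (-1) ^ u * iteratedDeriv u (fun y ↦ mgf X μ (-y)) z := by
  rw [iteratedDeriv_comp_neg, iteratedDeriv_mgf hz, smul_eq_mul, ← mul_assoc, ← mul_pow,
    neg_one_mul, neg_neg, one_pow, one_mul]

lemma erlangTail_mul (n : ℕ) (z x : ℝ) :
    erlangTail n (z * x) =
      ∑ u ∈ Finset.range n, z ^ u / u.factorial * (x ^ u * exp (-z * x)) := by
  refine Finset.sum_congr rfl fun u _ ↦ ?_
  rw [mul_pow, neg_mul]
  ring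

lemma integrable_erlangTail_mul {z : ℝ} (hz : -z ∈ interior (integrableExpSet X μ)) (n : ℕ) :
    Integrable (fun ω ↦ erlangTail n (z * X ω)) μ := by
  simp_rw [erlangTail_mul]
  exact integrable_finsetSum _ fun u _ ↦
    (integrable_pow_mul_exp_of_mem_interior_integrableExpSet hz u).const_mul _

lemma integral_erlangTail_mul {z : ℝ} (hz : -z ∈ interior (integrableExpSet X μ)) (n : ℕ) :
    ∫ ω, erlangTail n (z * X ω) ∂μ =
      ∑ u ∈ Finset.range n, (-1) ^ u / u.factorial * z ^ u *
        iteratedDeriv u (fun y ↦ mgf X μ (-y)) z := by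
  simp_rw [erlangTail_mul]
  rw [integral_finsetSum _ fun u _ ↦
    (integrable_pow_mul_exp_of_mem_interior_integrableExpSet hz u).const_mul _]
  refine Finset.sum_congr rfl fun u _ ↦ ?_
  rw [integral_const_mul, integral_pow_mul_exp_neg_mul hz]
  ring

end Laplace

section Fading

variable {Ω : Type*} [MeasurableSpace Ω] {μ : Measure Ω} [IsProbabilityMeasure μ] {H I : Ω → ℝ}

lemma measureReal_lt_mul_of_map_eq_gammaMeasure {U : ℕ} (hU : U ≠ 0) {r s : ℝ} (hr : 0 < r)
    (hs : 0 < s) (hH : AEMeasurable H μ) (hI : AEMeasurable I μ)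
    (hHgamma : μ.map H = gammaMeasure U r) (hI0 : ∀ᵐ ω ∂μ, 0 ≤ I ω) (hindep : IndepFun H I μ) :
    μ.real {ω | H ω < s * I ω} =
      1 - ∑ u ∈ Finset.range U, (-1) ^ u / u.factorial * (r * s) ^ u *
        iteratedDeriv u (fun z ↦ mgf I μ (-z)) (r * s) := by
  have hz : -(r * s) ∈ interior (integrableExpSet I μ) :=
    mem_interior_integrableExpSet_of_neg hI hI0 (neg_neg_of_pos (mul_pos hr hs))
  calc μ.real {ω | H ω < s * I ω}
      = ∫ ω, (gammaMeasure U r).real (Set.Iio (s * I ω)) ∂μ := by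
        rw [← hHgamma]
        exact measureReal_prodMk_mem_of_indepFun hH hI hindep (s := {p | p.1 < s * p.2})
          (measurableSet_lt measurable_fst (measurable_snd.const_mul s))
    _ = ∫ ω, (1 - erlangTail U (r * s * I ω)) ∂μ := by
        refine integral_congr_ae ?_
        filter_upwards [hI0] with ω hω
        rw [gammaMeasure_real_Iio_natCast hU hr (mul_nonneg hs.le hω), mul_assoc]
    _ = 1 - ∫ ω, erlangTail U (r * s * I ω) ∂μ := by
        rw [integral_sub (integrable_const 1) (integrable_erlangTail_mul hz U)]
        simp only [integral_const, probReal_univ, one_smul]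
    _ = 1 - ∑ u ∈ Finset.range U, (-1) ^ u / u.factorial * (r * s) ^ u *
          iteratedDeriv u (fun z ↦ mgf I μ (-z)) (r * s) := by
        rw [integral_erlangTail_mul hz]

lemma mul_mul_rpow_neg_div_lt_iff {P r₀ i : ℝ} (hP : 0 < P) (hr₀ : 0 < r₀) (hi : 0 < i)
    (η T h : ℝ) : P * h * r₀ ^ (-η) / i < T ↔ h < T * r₀ ^ η / P * i := by
  have hrη : 0 < r₀ ^ η := rpow_pos_of_pos hr₀ η
  rw [rpow_neg hr₀.le, div_lt_iff₀ hi, ← div_eq_mul_inv, div_lt_iff₀ hrη, div_mul_eq_mul_div,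
    lt_div_iff₀ hP, mul_comm P h, mul_right_comm T i]

theorem stmt8_general {U : ℕ} (hU : U ≠ 0) {r : ℝ} (hr : 0 < r)
    (hH : AEMeasurable H μ) (hI : AEMeasurable I μ) (hHgamma : μ.map H = gammaMeasure U r)
    (hIpos : ∀ᵐ ω ∂μ, 0 < I ω) (hindep : IndepFun H I μ)
    {P r₀ T : ℝ} (hP : 0 < P) (hr₀ : 0 < r₀) (hT : 0 < T) (η : ℝ)
    {L : ℝ → ℝ} (hL : ∀ z : ℝ, 0 < z → L z = ∫ ω, exp (-z * I ω) ∂μ) :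
    μ.real {ω | P * H ω * r₀ ^ (-η) / I ω < T} =
      1 - ∑ u ∈ Finset.range U, (-1) ^ u / u.factorial * (r * (T * r₀ ^ η / P)) ^ u *
        iteratedDeriv u L (r * (T * r₀ ^ η / P)) := by
  have hs : 0 < T * r₀ ^ η / P := by positivity
  have hevent : {ω | P * H ω * r₀ ^ (-η) / I ω < T} =ᵐ[μ] {ω | H ω < T * r₀ ^ η / P * I ω} := by
    filter_upwards [hIpos] with ω hω
    exact propext (mul_mul_rpow_neg_div_lt_iff hP hr₀ hω η T (H ω))
  have hLmgf : L =ᶠ[nhds (r * (T * r₀ ^ η / P))] fun z ↦ mgf I μ (-z) := by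
    filter_upwards [Ioi_mem_nhds (mul_pos hr hs)] with z hz
    exact hL z hz
  simp_rw [hLmgf.iteratedDeriv_eq]
  rw [measureReal_congr hevent, measureReal_lt_mul_of_map_eq_gammaMeasure hU hr hs hH hI hHgamma
    (hIpos.mono fun _ ↦ le_of_lt) hindep]

end Fading

/-- Nakagami-m (integer gamma shape `U`) SINR distribution through derivatives of the
Laplace transform of the interference power: if `H ~ Gamma(U, 1)` is independent of the
a.s. positive interference power `I`, and `L z = E[e^{−z I}]`, then
`ℙ[P H r₀^{−η} / I < T] = 1 − ∑_{u=0}^{U−1} ((−1)^u / u!) (T r₀^η / P)^u L^{(u)}(T r₀^η / P)`. -/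
theorem stmt8 {Ω : Type*} [MeasurableSpace Ω] (μ : Measure Ω) [IsProbabilityMeasure μ]
    (U : ℕ) (hU : 1 ≤ U)
    (H I : Ω → ℝ) (hH : Measurable H) (hI : Measurable I)
    (hHgamma : μ.map H = gammaMeasure U 1)
    (hIpos : ∀ᵐ ω ∂μ, 0 < I ω) (hInonneg : ∀ ω, 0 ≤ I ω)
    (hindep : IndepFun H I μ)
    (P r₀ η T : ℝ) (hP : 0 < P) (hr₀ : 0 < r₀) (hη : 0 < η) (hT : 0 < T)
    (L : ℝ → ℝ) (hL : ∀ z : ℝ, 0 < z → L z = ∫ ω, Real.exp (-z * I ω) ∂μ)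
    (hLsmooth : ContDiffOn ℝ (⊤ : ℕ∞) L (Set.Ioi 0)) :
    (μ {ω | P * H ω * r₀ ^ (-η) / I ω < T}).toReal =
      1 - ∑ u ∈ Finset.range U,
        ((-1 : ℝ) ^ u / Nat.factorial u) * (T * r₀ ^ η / P) ^ u *
          iteratedDeriv u L (T * r₀ ^ η / P) := by
  simpa only [one_mul, measureReal_def] using stmt8_general (Nat.one_le_iff_ne_zero.1 hU) one_pos
    hH.aemeasurable hI.aemeasurable hHgamma hIpos hindep hP hr₀ hT η hL
end

section
/- Let Y be an exponential random variable with rate 1 and let X be a nonnegative real random variable independent of Y; let C > 0 be real. Define erfc(x) = (2/√π) ∫_x^∞ e^{−t²} dt. Then E[ erfc( √( Y / (X + C) ) ) ] = 1 − (1/√π) ∫_0^∞ z^{−1/2} e^{−z(1 + C)} E[e^{−z X}] dz. -/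
/-!
Since `1 - erfc x = (2/√π) ∫_0^x e^{-t²} dt`, the layer cake formula turns `E[1 - erfc √S]` into
an integral of the tail `P(S > z)` against the density `z^{-1/2} e^{-z} / √π`. For `S = Y / A`
with `Y` exponential and independent of `A > 0`, conditioning on `A` shows that this tail is the
Laplace transform of `A`: `P(Y / A > z) = P(Y > z A) = E[e^{-r z A}]`.
-/

open MeasureTheory ProbabilityTheory Real

/-- The complementary error function `erfc x = (2/√π) ∫_x^∞ e^{−t²} dt`. -/
noncomputable def erfc (x : ℝ) : ℝ :=
  (2 / Real.sqrt π) * ∫ t in Set.Ioi x, Real.exp (-t ^ 2)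

lemma integrable_exp_neg_sq : Integrable fun t : ℝ => exp (-t ^ 2) := by
  simpa using integrable_exp_neg_mul_sq one_pos

lemma one_sub_erfc (x : ℝ) : 1 - erfc x = (2 / √π) * ∫ t in 0..x, exp (-t ^ 2) := by
  have hsplit := intervalIntegral.integral_interval_add_Ioi
    (integrable_exp_neg_sq.integrableOn (s := Set.Ioi 0))
    (integrable_exp_neg_sq.integrableOn (s := Set.Ioi x))
  have hgauss : ∫ t in Set.Ioi (0 : ℝ), exp (-t ^ 2) = √π / 2 := by
    simpa using integral_gaussian_Ioi 1
  have hπ : √π ≠ 0 := by positivity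
  rw [erfc, eq_sub_of_add_eq hsplit, hgauss]
  field_simp

lemma erfc_nonneg (x : ℝ) : 0 ≤ erfc x :=
  mul_nonneg (by positivity) (integral_nonneg fun t => (exp_pos _).le)

lemma erfc_le_one {x : ℝ} (hx : 0 ≤ x) : erfc x ≤ 1 := by
  rw [← sub_nonneg, one_sub_erfc]
  exact mul_nonneg (by positivity)
    (intervalIntegral.integral_nonneg hx fun t _ => (exp_pos _).le)

lemma erfc_antitone : Antitone erfc := fun _ _ hxy =>
  mul_le_mul_of_nonneg_left
    (setIntegral_mono_set integrable_exp_neg_sq.integrableOn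
      (ae_of_all _ fun _ => (exp_pos _).le) (Set.Ioi_subset_Ioi hxy).eventuallyLE)
    (by positivity)

section

variable {Ω : Type*} {mΩ : MeasurableSpace Ω} {μ : Measure Ω}

lemma integral_intervalIntegral_eq_integral_measureReal_lt_mul [IsFiniteMeasure μ]
    {f : Ω → ℝ} {g : ℝ → ℝ} (hf : AEMeasurable f μ) (hf_nonneg : 0 ≤ᵐ[μ] f)
    (hg : LocallyIntegrable g) (hg_nonneg : ∀ t, 0 ≤ g t) :
    ∫ ω, (∫ t in 0..f ω, g t) ∂μ = ∫ t in Set.Ioi 0, μ.real {ω | t < f ω} * g t := by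
  have hg_int (a b : ℝ) : IntervalIntegrable g volume a b :=
    (hg.integrableOn_isCompact isCompact_uIcc).intervalIntegrable
  have hprim : AEMeasurable (fun ω => ∫ t in 0..f ω, g t) μ :=
    (intervalIntegral.continuous_primitive hg_int 0).measurable.comp_aemeasurable hf
  have htail : Antitone fun t => μ.real {ω | t < f ω} := fun _ _ hst =>
    measureReal_mono fun _ => hst.trans_lt
  have hprim_nonneg : 0 ≤ᵐ[μ] fun ω => ∫ t in 0..f ω, g t :=
    hf_nonneg.mono fun _ hω => intervalIntegral.integral_nonneg hω fun t _ => hg_nonneg t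
  rw [integral_eq_lintegral_of_nonneg_ae hprim_nonneg hprim.aestronglyMeasurable,
    integral_eq_lintegral_of_nonneg_ae
      (ae_of_all _ fun t => mul_nonneg measureReal_nonneg (hg_nonneg t))
      (htail.measurable.aestronglyMeasurable.mul hg.aestronglyMeasurable.restrict),
    lintegral_comp_eq_lintegral_meas_lt_mul μ hf_nonneg hf (fun t _ => hg_int 0 t)
      (ae_of_all _ hg_nonneg)]
  simp only [ENNReal.ofReal_mul measureReal_nonneg, ofReal_measureReal (measure_ne_top μ _)]

lemma integral_one_sub_erfc [IsFiniteMeasure μ] {W : Ω → ℝ} (hW : AEMeasurable W μ)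
    (hW_nonneg : 0 ≤ᵐ[μ] W) :
    ∫ ω, (1 - erfc (W ω)) ∂μ =
      (2 / √π) * ∫ t in Set.Ioi 0, μ.real {ω | t < W ω} * exp (-t ^ 2) := by
  simp only [one_sub_erfc]
  rw [integral_const_mul, integral_intervalIntegral_eq_integral_measureReal_lt_mul hW hW_nonneg
    integrable_exp_neg_sq.locallyIntegrable fun t => (exp_pos _).le]

lemma integral_one_sub_erfc_sqrt [IsFiniteMeasure μ] {S : Ω → ℝ} (hS : AEMeasurable S μ) :
    ∫ ω, (1 - erfc √(S ω)) ∂μ =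
      (1 / √π) * ∫ z in Set.Ioi 0, z ^ (-(1/2) : ℝ) * exp (-z) * μ.real {ω | z < S ω} := by
  rw [integral_one_sub_erfc hS.sqrt (ae_of_all _ fun _ => sqrt_nonneg _),
    -- the substitution `t = √z`
    ← integral_comp_rpow_Ioi_of_pos (one_half_pos (α := ℝ)), ← integral_const_mul,
    ← integral_const_mul]
  refine setIntegral_congr_fun measurableSet_Ioi fun z (hz : 0 < z) => ?_
  simp only [← sqrt_eq_rpow, sqrt_lt_sqrt_iff hz.le, sq_sqrt hz.le, smul_eq_mul,
    show (1 / 2 - 1 : ℝ) = -(1/2) by norm_num]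
  ring

lemma integral_erfc_sqrt [IsProbabilityMeasure μ] {S : Ω → ℝ} (hS : AEMeasurable S μ) :
    ∫ ω, erfc √(S ω) ∂μ =
      1 - (1 / √π) * ∫ z in Set.Ioi 0, z ^ (-(1/2) : ℝ) * exp (-z) * μ.real {ω | z < S ω} := by
  have hint : Integrable (fun ω => erfc √(S ω)) μ :=
    .of_bound (erfc_antitone.measurable.comp_aemeasurable hS.sqrt).aestronglyMeasurable 1 <|
      ae_of_all _ fun ω => by
        rw [norm_of_nonneg (erfc_nonneg _)]
        exact erfc_le_one (sqrt_nonneg _)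
  rw [← integral_one_sub_erfc_sqrt hS, integral_sub (integrable_const 1) hint]
  simp

lemma measure_lt_eq_lintegral_measure_Ioi [IsFiniteMeasure μ]
    {α : Type*} [TopologicalSpace α] [LinearOrder α] [OrderClosedTopology α]
    [SecondCountableTopology α] [MeasurableSpace α] [OpensMeasurableSpace α]
    {X Y : Ω → α} {ν : Measure α} (hX : AEMeasurable X μ) (hY : HasLaw Y ν μ)
    (hindep : IndepFun X Y μ) :
    μ {ω | X ω < Y ω} = ∫⁻ ω, ν (Set.Ioi (X ω)) ∂μ := by
  have : IsFiniteMeasure ν := hY.isFiniteMeasure_iff.1 inferInstance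
  have hlt : MeasurableSet {p : α × α | p.1 < p.2} := measurableSet_lt measurable_fst measurable_snd
  calc μ {ω | X ω < Y ω}
      = μ.map (fun ω => (X ω, Y ω)) {p | p.1 < p.2} :=
        (Measure.map_apply_of_aemeasurable (hX.prodMk hY.aemeasurable) hlt).symm
    _ = ∫⁻ x, ν (Set.Ioi x) ∂(μ.map X) := by
        rw [hindep.map_prod_eq_prod_map_map hX hY.aemeasurable, hY.map_eq, Measure.prod_apply hlt]
        rfl
    _ = ∫⁻ ω, ν (Set.Ioi (X ω)) ∂μ :=
        lintegral_map' (measurable_measure_prodMk_left hlt).aemeasurable hX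

lemma expMeasure_Ioi {r x : ℝ} (hr : 0 < r) (hx : 0 ≤ x) :
    expMeasure r (Set.Ioi x) = ENNReal.ofReal (exp (-(r * x))) := by
  have := isProbabilityMeasure_expMeasure hr
  rw [← ofReal_measureReal, ← Set.compl_Iic, probReal_compl_eq_one_sub measurableSet_Iic,
    ← cdf_eq_real, cdf_expMeasure_eq hr, if_pos hx, sub_sub_cancel]

lemma measureReal_lt_div_eq_mgf {Y A : Ω → ℝ} {r z : ℝ} (hr : 0 < r)
    (hz : 0 ≤ z) (hY : HasLaw Y (expMeasure r) μ) (hA : AEMeasurable A μ)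
    (hA_pos : ∀ᵐ ω ∂μ, 0 < A ω) (hindep : IndepFun Y A μ) :
    μ.real {ω | z < Y ω / A ω} = mgf A μ (-(r * z)) := by
  have := isProbabilityMeasure_expMeasure hr
  have : IsProbabilityMeasure μ := hY.isProbabilityMeasure
  have hindep' : IndepFun (fun ω => z * A ω) Y μ :=
    hindep.symm.comp (measurable_const_mul z) measurable_id
  have htail : μ {ω | z < Y ω / A ω} = ∫⁻ ω, ENNReal.ofReal (exp (-(r * z) * A ω)) ∂μ :=
    calc μ {ω | z < Y ω / A ω}
        = μ {ω | z * A ω < Y ω} :=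
          measure_congr <| hA_pos.mono fun _ hω => propext (lt_div_iff₀ hω)
      _ = ∫⁻ ω, expMeasure r (Set.Ioi (z * A ω)) ∂μ :=
          measure_lt_eq_lintegral_measure_Ioi (hA.const_mul z) hY hindep'
      _ = ∫⁻ ω, ENNReal.ofReal (exp (-(r * z) * A ω)) ∂μ :=
          lintegral_congr_ae <| hA_pos.mono fun ω hω => by
            simp only [expMeasure_Ioi hr (mul_nonneg hz hω.le), neg_mul, mul_assoc]
  rw [measureReal_def, htail, mgf, integral_eq_lintegral_of_nonneg_ae
    (ae_of_all _ fun _ => (exp_pos _).le) (hA.const_mul _).exp.aestronglyMeasurable]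

theorem stmt9_general {Y A : Ω → ℝ} {r : ℝ} (hr : 0 < r)
    (hY : HasLaw Y (expMeasure r) μ) (hA : AEMeasurable A μ) (hA_pos : ∀ᵐ ω ∂μ, 0 < A ω)
    (hindep : IndepFun Y A μ) :
    ∫ ω, erfc √(Y ω / A ω) ∂μ =
      1 - (1 / √π) * ∫ z in Set.Ioi 0, z ^ (-(1/2) : ℝ) * exp (-z) * mgf A μ (-(r * z)) := by
  have := isProbabilityMeasure_expMeasure hr
  have : IsProbabilityMeasure μ := hY.isProbabilityMeasure
  rw [integral_erfc_sqrt (hY.aemeasurable.fun_div hA)]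
  congr 2
  refine setIntegral_congr_fun measurableSet_Ioi fun z (hz : 0 < z) => ?_
  simp only [measureReal_lt_div_eq_mgf hr hz.le hY hA hA_pos hindep]

end

/-- Hamdi's lemma (`m = 1` case): for `Y` unit-rate exponential, `X ≥ 0` independent of
`Y`, and `C > 0`,
`E[erfc(√(Y/(X+C)))] = 1 − (1/√π) ∫_0^∞ z^{−1/2} e^{−z(1+C)} E[e^{−zX}] dz`. -/
theorem stmt9 {Ω : Type*} [MeasurableSpace Ω] (μ : Measure Ω) [IsProbabilityMeasure μ]
    (Y X : Ω → ℝ) (hY : Measurable Y) (hX : Measurable X)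
    (hYexp : μ.map Y = expMeasure 1)
    (hXnonneg : ∀ ω, 0 ≤ X ω)
    (hindep : IndepFun Y X μ)
    (C : ℝ) (hC : 0 < C) :
    ∫ ω, erfc (Real.sqrt (Y ω / (X ω + C))) ∂μ =
      1 - (1 / Real.sqrt π) * ∫ z in Set.Ioi (0:ℝ),
        z ^ (-(1/2) : ℝ) * Real.exp (-z * (1 + C)) * ∫ ω, Real.exp (-z * X ω) ∂μ := by
  rw [stmt9_general one_pos ⟨hY.aemeasurable, hYexp⟩ (hX.add_const C).aemeasurable
    (ae_of_all _ fun ω => add_pos_of_nonneg_of_pos (hXnonneg ω) hC)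
    (hindep.comp measurable_id (measurable_id.add_const C))]
  simp_rw [one_mul, mgf_add_const, mgf, mul_comm (∫ _, _ ∂μ), ← mul_assoc, mul_assoc (_ ^ _),
    ← exp_add, mul_one_add]
end

section
/- Let λ > 0, P > 0, r₀ > 0 and N₀ > 0 be real. Let H be an exponential random variable with rate 1 and I a nonnegative real random variable independent of H whose Laplace transform satisfies E[e^{−z I}] = exp{ −πλ √(zP) · arctan( √(zP) / r₀² ) } for all z > 0. Then E[ log( 1 + P·H·r₀^{−4} / (I + N₀) ) ] = ∫_0^∞ (1/(t + 1)) · exp{ −t N₀ r₀⁴ / P − πλ √t r₀² arctan(√t) } dt. -/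
/-!
Since `log (1 + x) = ∫ t in 0..x, 1 / (t + 1)`, the layer-cake formula turns the rate into the
integral of the tail `P(Υ > t)` of the SINR against `1 / (t + 1)`. Dividing numerator and
denominator by the mean received power, the SINR is `H / Y` with `Y = (I + N₀) / (P r₀⁻⁴)`, and
conditioning on `Y` gives `P(H > t Y) = E[exp (-t Y)]`, because the tail of `H` is itself an
exponential function. So the rate depends on the interference only through its Laplace transform.
-/

open MeasureTheory ProbabilityTheory Real

lemma expMeasure_real_Ioi {r x : ℝ} (hr : 0 < r) (hx : 0 ≤ x) :
    (expMeasure r).real (Set.Ioi x) = exp (-(r * x)) := by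
  have := isProbabilityMeasure_expMeasure hr
  rw [← Set.compl_Iic, probReal_compl_eq_one_sub measurableSet_Iic, ← cdf_eq_real,
    cdf_expMeasure_eq hr, if_pos hx, sub_sub_cancel]

lemma integral_one_div_add_one {x : ℝ} (hx : 0 ≤ x) :
    ∫ t in (0 : ℝ)..x, 1 / (t + 1) = log (1 + x) := by
  rw [intervalIntegral.integral_comp_add_right (fun t ↦ 1 / t),
    integral_one_div_of_pos (by positivity) (by positivity), zero_add, div_one, add_comm]

section

variable {Ω : Type*} [MeasurableSpace Ω] {μ : Measure Ω}

lemma integral_log_one_add_eq_integral_measureReal_lt [IsFiniteMeasure μ] {X : Ω → ℝ}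
    (hX : AEMeasurable X μ) (hX_nonneg : 0 ≤ᵐ[μ] X) :
    ∫ ω, log (1 + X ω) ∂μ = ∫ t in Set.Ioi 0, 1 / (t + 1) * μ.real {ω | t < X ω} := by
  have hlog_nonneg : 0 ≤ᵐ[μ] fun ω ↦ log (1 + X ω) := by
    filter_upwards [hX_nonneg] with ω hω
    exact log_nonneg (le_add_of_nonneg_right hω)
  have hweight_nonneg : ∀ t ∈ Set.Ioi (0 : ℝ), 0 ≤ 1 / (t + 1) := fun t ht ↦
    one_div_nonneg.2 (add_pos ht one_pos).le
  have hweight_integrable : ∀ t > (0 : ℝ),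
      IntervalIntegrable (fun s ↦ 1 / (s + 1)) volume 0 t := fun t ht ↦ by
    refine intervalIntegral.intervalIntegrable_one_div (fun s hs ↦ ?_) (by fun_prop)
    rw [Set.uIcc_of_le ht.le] at hs
    exact (add_pos_of_nonneg_of_pos hs.1 one_pos).ne'
  have htail_measurable : Measurable fun t ↦ μ.real {ω | t < X ω} :=
    Antitone.measurable fun s t hst ↦ measureReal_mono fun ω (hω : t < X ω) ↦ hst.trans_lt hω
  rw [integral_eq_lintegral_of_nonneg_ae hlog_nonneg
      (by fun_prop : AEMeasurable _ μ).aestronglyMeasurable,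
    integral_eq_lintegral_of_nonneg_ae
      (ae_restrict_of_forall_mem measurableSet_Ioi fun t ht ↦
        mul_nonneg (hweight_nonneg t ht) measureReal_nonneg)
      (by fun_prop : Measurable _).aestronglyMeasurable]
  congr 1
  calc ∫⁻ ω, ENNReal.ofReal (log (1 + X ω)) ∂μ
      = ∫⁻ ω, ENNReal.ofReal (∫ t in (0 : ℝ)..X ω, 1 / (t + 1)) ∂μ :=
        lintegral_congr_ae <| hX_nonneg.mono fun ω hω ↦ by
          simp only [integral_one_div_add_one hω]
    _ = ∫⁻ t in Set.Ioi 0, μ {ω | t < X ω} * ENNReal.ofReal (1 / (t + 1)) :=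
        lintegral_comp_eq_lintegral_meas_lt_mul μ hX_nonneg hX hweight_integrable
          (ae_restrict_of_forall_mem measurableSet_Ioi hweight_nonneg)
    _ = ∫⁻ t in Set.Ioi 0, ENNReal.ofReal (1 / (t + 1) * μ.real {ω | t < X ω}) :=
        setLIntegral_congr_fun measurableSet_Ioi fun t ht ↦ by
          simp only [ENNReal.ofReal_mul (hweight_nonneg t ht),
            ofReal_measureReal (measure_ne_top μ _), mul_comm]

lemma measureReal_lt_eq_integral_of_indepFun {E : Type*} [LinearOrder E] [TopologicalSpace E]
    [OrderClosedTopology E] [SecondCountableTopology E] [MeasurableSpace E]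
    [OpensMeasurableSpace E] [IsFiniteMeasure μ] {X Y : Ω → E} (hX : AEMeasurable X μ)
    (hY : AEMeasurable Y μ) (hXY : IndepFun X Y μ) :
    μ.real {ω | Y ω < X ω} = ∫ ω, (μ.map X).real (Set.Ioi (Y ω)) ∂μ := by
  have hS : MeasurableSet {p : E × E | p.2 < p.1} := measurableSet_lt measurable_snd measurable_fst
  have htail_measurable : Measurable fun y ↦ μ.map X (Set.Ioi y) :=
    measurable_measure_prodMk_right hS
  have hmeasure : μ {ω | Y ω < X ω} = ∫⁻ ω, μ.map X (Set.Ioi (Y ω)) ∂μ := by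
    calc μ {ω | Y ω < X ω}
        = μ.map (fun ω ↦ (X ω, Y ω)) {p | p.2 < p.1} :=
          (Measure.map_apply_of_aemeasurable (hX.prodMk hY) hS).symm
      _ = ∫⁻ y, μ.map X (Set.Ioi y) ∂(μ.map Y) := by
          rw [(indepFun_iff_map_prod_eq_prod_map_map hX hY).1 hXY, Measure.prod_apply_symm hS]
          rfl
      _ = ∫⁻ ω, μ.map X (Set.Ioi (Y ω)) ∂μ := lintegral_map' htail_measurable.aemeasurable hY
  rw [measureReal_def, hmeasure]
  exact (integral_toReal (htail_measurable.comp_aemeasurable hY)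
    (ae_of_all _ fun _ ↦ measure_lt_top _ _)).symm

lemma ae_pos_of_hasLaw_expMeasure {r : ℝ} (hr : 0 < r) {X : Ω → ℝ}
    (hX : HasLaw X (expMeasure r) μ) : ∀ᵐ ω ∂μ, 0 < X ω := by
  have := isProbabilityMeasure_expMeasure hr
  have hIoi : (expMeasure r).real (Set.Ioi 0) = 1 := by
    rw [expMeasure_real_Ioi hr le_rfl, mul_zero, neg_zero, exp_zero]
  refine (hX.ae_iff (p := fun x ↦ 0 < x) measurableSet_Ioi.mem).2 ?_
  exact (mem_ae_iff_prob_eq_one measurableSet_Ioi).2 <| by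
    rw [← ofReal_measureReal (measure_ne_top _ _), hIoi, ENNReal.ofReal_one]

lemma measureReal_lt_eq_mgf_of_hasLaw_expMeasure {r : ℝ} (hr : 0 < r) {X Y : Ω → ℝ}
    (hX : HasLaw X (expMeasure r) μ) (hY : AEMeasurable Y μ) (hY_nonneg : 0 ≤ᵐ[μ] Y)
    (hXY : IndepFun X Y μ) :
    μ.real {ω | Y ω < X ω} = mgf Y μ (-r) := by
  have := isProbabilityMeasure_expMeasure hr
  have := hX.isFiniteMeasure
  rw [measureReal_lt_eq_integral_of_indepFun hX.aemeasurable hY hXY, hX.map_eq]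
  refine integral_congr_ae (hY_nonneg.mono fun ω hω ↦ ?_)
  simp only [expMeasure_real_Ioi hr hω, neg_mul]

theorem integral_log_one_add_div_eq_integral_mgf {r : ℝ} (hr : 0 < r) {X Y : Ω → ℝ}
    (hX : HasLaw X (expMeasure r) μ) (hY : AEMeasurable Y μ) (hY_pos : ∀ᵐ ω ∂μ, 0 < Y ω)
    (hXY : IndepFun X Y μ) :
    ∫ ω, log (1 + X ω / Y ω) ∂μ = ∫ t in Set.Ioi 0, 1 / (t + 1) * mgf Y μ (-(r * t)) := by
  have := isProbabilityMeasure_expMeasure hr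
  have := hX.isFiniteMeasure
  have hX_pos := ae_pos_of_hasLaw_expMeasure hr hX
  have hratio_nonneg : 0 ≤ᵐ[μ] fun ω ↦ X ω / Y ω := by
    filter_upwards [hX_pos, hY_pos] with ω hXω hYω using (div_pos hXω hYω).le
  rw [integral_log_one_add_eq_integral_measureReal_lt (hX.aemeasurable.fun_div hY) hratio_nonneg]
  refine setIntegral_congr_fun measurableSet_Ioi fun t (ht : 0 < t) ↦ ?_
  have htail : μ.real {ω | t < X ω / Y ω} = mgf Y μ (-(r * t)) := by
    calc μ.real {ω | t < X ω / Y ω}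
        = μ.real {ω | t * Y ω < X ω} :=
          measureReal_congr <| hY_pos.mono fun ω hω ↦ propext (lt_div_iff₀ hω)
      _ = mgf (fun ω ↦ t * Y ω) μ (-r) :=
          measureReal_lt_eq_mgf_of_hasLaw_expMeasure hr hX (hY.const_mul t)
            (hY_pos.mono fun ω hω ↦ (mul_pos ht hω).le)
            (hXY.comp measurable_id (measurable_const_mul t))
      _ = mgf Y μ (-(r * t)) := by rw [mgf_const_mul, mul_neg, mul_comm]
  simp only [htail]

theorem integral_log_one_add_mul_div_add_eq_integral_mgf {r S N : ℝ} (hr : 0 < r) (hS : 0 < S)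
    {X I : Ω → ℝ} (hX : HasLaw X (expMeasure r) μ) (hI : AEMeasurable I μ)
    (hIN_pos : ∀ᵐ ω ∂μ, 0 < I ω + N) (hXI : IndepFun X I μ) :
    ∫ ω, log (1 + S * X ω / (I ω + N)) ∂μ =
      ∫ t in Set.Ioi 0, 1 / (t + 1) * (mgf I μ (-(r * t / S)) * exp (-(r * t / S) * N)) := by
  have hsnr (ω : Ω) : S * X ω / (I ω + N) = X ω / (S⁻¹ * (I ω + N)) := by
    rw [← div_eq_inv_mul, div_div_eq_mul_div, mul_comm]
  have hmgf (t : ℝ) : mgf (fun ω ↦ S⁻¹ * (I ω + N)) μ (-(r * t)) =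
      mgf I μ (-(r * t / S)) * exp (-(r * t / S) * N) := by
    rw [mgf_const_mul, mgf_add_const, mul_neg, ← div_eq_inv_mul]
  simp only [hsnr, ← hmgf]
  exact integral_log_one_add_div_eq_integral_mgf hr hX (by fun_prop)
    (hIN_pos.mono fun ω hω ↦ mul_pos (inv_pos.2 hS) hω)
    (hXI.comp measurable_id (by fun_prop : Measurable fun x ↦ S⁻¹ * (x + N)))

end

/-- Ergodic rate in a Poisson cellular network with `η = 4`: with `H` unit-rate
exponential, `I ≥ 0` independent of `H` with Laplace transform
`E[e^{−zI}] = exp{−πλ√(zP) arctan(√(zP)/r₀²)}`,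
`E[log(1 + P H r₀^{−4}/(I + N₀))]
  = ∫_0^∞ (1/(t+1)) exp{−t N₀ r₀⁴/P − πλ√t r₀² arctan(√t)} dt`. -/
theorem stmt14 {Ω : Type*} [MeasurableSpace Ω] (μ : Measure Ω) [IsProbabilityMeasure μ]
    (lam P r₀ N₀ : ℝ) (hlam : 0 < lam) (hP : 0 < P) (hr₀ : 0 < r₀) (hN₀ : 0 < N₀)
    (H I : Ω → ℝ) (hH : Measurable H) (hI : Measurable I)
    (hHexp : μ.map H = expMeasure 1)
    (hInonneg : ∀ ω, 0 ≤ I ω)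
    (hindep : IndepFun H I μ)
    (hLT : ∀ z : ℝ, 0 < z → ∫ ω, Real.exp (-z * I ω) ∂μ =
      Real.exp (-(π * lam * Real.sqrt (z * P) * Real.arctan (Real.sqrt (z * P) / r₀ ^ 2)))) :
    ∫ ω, Real.log (1 + P * H ω * r₀ ^ (-4 : ℤ) / (I ω + N₀)) ∂μ =
      ∫ t in Set.Ioi (0:ℝ), (1 / (t + 1)) *
        Real.exp (-(t * N₀ * r₀ ^ 4 / P) -
          π * lam * Real.sqrt t * r₀ ^ 2 * Real.arctan (Real.sqrt t)) := by
  have hH_law : HasLaw H (expMeasure 1) μ := ⟨hH.aemeasurable, hHexp⟩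
  have hIN_pos (ω : Ω) : 0 < I ω + N₀ := add_pos_of_nonneg_of_pos (hInonneg ω) hN₀
  have hS : 0 < P * r₀ ^ (-4 : ℤ) := by positivity
  simp only [mul_right_comm P _ (r₀ ^ (-4 : ℤ))]
  rw [integral_log_one_add_mul_div_add_eq_integral_mgf one_pos hS hH_law hI.aemeasurable
    (ae_of_all μ hIN_pos) hindep]
  refine setIntegral_congr_fun measurableSet_Ioi fun t (ht : 0 < t) ↦ ?_
  have hz : 1 * t / (P * r₀ ^ (-4 : ℤ)) = t * r₀ ^ 4 / P := by
    rw [zpow_neg, one_mul, ← div_eq_mul_inv, div_div_eq_mul_div]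
    norm_cast
  have hsqrt : √(t * r₀ ^ 4 / P * P) = √t * r₀ ^ 2 := by
    rw [div_mul_cancel₀ _ hP.ne', sqrt_mul ht.le, 
      show r₀ ^ 4 = (r₀ ^ 2) ^ 2 by ring, sqrt_sq (sq_nonneg r₀)]
  have hmgf : mgf I μ (-(t * r₀ ^ 4 / P)) =
      exp (-(π * lam * (√t * r₀ ^ 2) * arctan √t)) := by
    rw [mgf, hLT _ (by positivity), hsqrt, mul_div_cancel_right₀ _ (pow_pos hr₀ 2).ne']
  simp only [hz, hmgf, ← exp_add]
  congr 2
  ring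
end
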